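/- arXiv:1512.01160 — 2 statements merged into one kernel-verified Lean document; each statement's English description precedes it below -/
import Mathlib

section
/- Let L > 0, 0 < α ≤ 1, and consider the elongated torus T²_α = (0, L/α) × (0, L). Let v_1, …, v_m : ℝ² → ℝ² be C¹ vector fields, periodic with period L/α in x_1 and period L in x_2, with div v_j = 0 on ℝ², with ∫_0^L v_j(x_1, t) dt = 0 for every x_1 and every j, and orthonormal in L²(T²_α; ℝ²), i.e. ∫_{T²_α} ⟨v_i(x), v_j(x)⟩ dx = δ_{ij}. Then ρ(x) := ∑_{j=1}^m |v_j(x)|² satisfies ∫_{T²_α} ρ(x)² dx ≤ (π/6) ∑_{j=1}^m ∫_{T²_α} |∇v_j(x)|² dx, with constant π/6 independent of α. -/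
open Real MeasureTheory

/-- Partial derivative with respect to the first variable. -/
noncomputable def pd1 (f : ℝ × ℝ → ℝ) (x : ℝ × ℝ) : ℝ :=
  deriv (fun s => f (s, x.2)) x.1

/-- Partial derivative with respect to the second variable. -/
noncomputable def pd2 (f : ℝ × ℝ → ℝ) (x : ℝ × ℝ) : ℝ :=
  deriv (fun t => f (x.1, t)) x.2

/-- `|∇v|² = ∑_{i,k=1}^2 (∂_i v^k)²` for a vector field `v : ℝ² → ℝ²`. -/
noncomputable def gradSq (v : ℝ × ℝ → ℝ × ℝ) (x : ℝ × ℝ) : ℝ :=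
  pd1 (fun y => (v y).1) x ^ 2 + pd2 (fun y => (v y).1) x ^ 2 +
    pd1 (fun y => (v y).2) x ^ 2 + pd2 (fun y => (v y).2) x ^ 2

/-!
The argument is Rumin's. Expand the fields in divergence-free plane waves `e k`, indexed by the
frequencies `k ∈ ℤ²` with `k.2 ≠ 0`, whose Laplace eigenvalues we write `l k`. At each point the
projections of an orthonormal family onto the span of the waves with `l k ≤ t` have, by Bessel's
inequality, a density no larger than that of these waves, namely their number divided by the area
of the torus. Because the frequencies with `k.2 = 0` are absent, counting lattice points row by row
bounds this by `π / 36 * t`, uniformly in `α ≤ 1`. Hence `(√ρ - √(π / 36 * t))₊²` is at most the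
density of the high-frequency remainders, and integrating over the point and over `t > 0` gives
`∫ ρ² / (6 * (π / 36))` on the left and `∑ j, ∑ k, l k * |⟨e k, v j⟩|² = ∑ j, ∫ |∇v j|²` on the
right.
-/

section OrthonormalSystems

variable {𝕜 H E ι J : Type*} [RCLike 𝕜] [NormedAddCommGroup H] [InnerProductSpace 𝕜 H]
  [NormedAddCommGroup E] [InnerProductSpace 𝕜 E]

lemma norm_sq_sum_smul_of_orthonormal {e : ι → H} (he : Orthonormal 𝕜 e) (K : Finset ι)
    (z : ι → 𝕜) : ‖∑ k ∈ K, z k • e k‖ ^ 2 = ∑ k ∈ K, ‖z k‖ ^ 2 := by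
  have hinner := he.inner_sum z z K
  simp only [RCLike.conj_mul, inner_self_eq_norm_sq_to_K] at hinner
  exact_mod_cast hinner

lemma sum_norm_sq_sum_inner_mul_le [Fintype J] {v : J → H} {e : ι → H} (hv : Orthonormal 𝕜 v)
    (he : Orthonormal 𝕜 e) (K : Finset ι) (z : ι → 𝕜) :
    ∑ j, ‖∑ k ∈ K, inner 𝕜 (e k) (v j) * z k‖ ^ 2 ≤ ∑ k ∈ K, ‖z k‖ ^ 2 := by
  set y : H := ∑ k ∈ K, star (z k) • e k
  have hcoeff : ∀ j, ‖∑ k ∈ K, inner 𝕜 (e k) (v j) * z k‖ = ‖inner 𝕜 (v j) y‖ := fun j => by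
    rw [norm_inner_symm, sum_inner]
    simp only [inner_smul_left, RCLike.star_def, RCLike.conj_conj, mul_comm]
  calc ∑ j, ‖∑ k ∈ K, inner 𝕜 (e k) (v j) * z k‖ ^ 2 = ∑ j, ‖inner 𝕜 (v j) y‖ ^ 2 := by
        simp only [hcoeff]
    _ ≤ ‖y‖ ^ 2 := hv.sum_inner_products_le y
    _ = ∑ k ∈ K, ‖z k‖ ^ 2 := by
        simp only [y, norm_sq_sum_smul_of_orthonormal he, norm_star]

lemma sum_norm_sq_sum_inner_smul_le [FiniteDimensional 𝕜 E] [Fintype J] {v : J → H} {e : ι → H}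
    (hv : Orthonormal 𝕜 v) (he : Orthonormal 𝕜 e) (K : Finset ι) (y : ι → E) :
    ∑ j, ‖∑ k ∈ K, inner 𝕜 (e k) (v j) • y k‖ ^ 2 ≤ ∑ k ∈ K, ‖y k‖ ^ 2 := by
  let b := stdOrthonormalBasis 𝕜 E
  calc ∑ j, ‖∑ k ∈ K, inner 𝕜 (e k) (v j) • y k‖ ^ 2
      = ∑ i, ∑ j, ‖∑ k ∈ K, inner 𝕜 (e k) (v j) * inner 𝕜 (b i) (y k)‖ ^ 2 := by
        rw [Finset.sum_comm]
        simp only [← b.sum_sq_norm_inner_right, inner_sum, inner_smul_right]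
    _ ≤ ∑ i, ∑ k ∈ K, ‖inner 𝕜 (b i) (y k)‖ ^ 2 :=
        Finset.sum_le_sum fun i _ => sum_norm_sq_sum_inner_mul_le hv he K _
    _ = ∑ k ∈ K, ‖y k‖ ^ 2 := by
        rw [Finset.sum_comm]
        simp only [b.sum_sq_norm_inner_right]

lemma ofReal_norm_sq (y : E) : ENNReal.ofReal (‖y‖ ^ 2) = ‖y‖ₑ ^ 2 := by
  rw [ENNReal.ofReal_pow (norm_nonneg _), ofReal_norm]

lemma norm_sq_sub_sum_inner_smul_add {e : ι → H} (he : Orthonormal 𝕜 e) (K : Finset ι) (v : H) :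
    ‖v - ∑ k ∈ K, inner 𝕜 (e k) v • e k‖ ^ 2 + ∑ k ∈ K, ‖inner 𝕜 (e k) v‖ ^ 2 = ‖v‖ ^ 2 := by
  set p := ∑ k ∈ K, inner 𝕜 (e k) v • e k with hp
  have horth : inner 𝕜 (v - p) p = 0 := by
    rw [hp, inner_sum]
    refine Finset.sum_eq_zero fun k hk => ?_
    rw [inner_smul_right, inner_sub_left, he.inner_left_sum _ hk, inner_conj_symm, sub_self,
      mul_zero]
  have hpyth := norm_add_sq_eq_norm_sq_add_norm_sq_of_inner_eq_zero _ _ horth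
  rw [sub_add_cancel] at hpyth
  rw [← norm_sq_sum_smul_of_orthonormal he, ← hp]
  linarith

lemma enorm_sq_sub_sum_inner_smul {e : ι → H} (he : Orthonormal 𝕜 e) (K : Finset ι) {v : H}
    (hv : ∑' k, ‖inner 𝕜 (e k) v‖ₑ ^ 2 = ‖v‖ₑ ^ 2) :
    ‖v - ∑ k ∈ K, inner 𝕜 (e k) v • e k‖ₑ ^ 2 =
      ∑' k : ((K : Set ι)ᶜ : Set ι), ‖inner 𝕜 (e k) v‖ₑ ^ 2 := by
  have hsplit := congrArg ENNReal.ofReal (norm_sq_sub_sum_inner_smul_add he K v)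
  rw [ENNReal.ofReal_add (by positivity) (by positivity),
    ENNReal.ofReal_sum_of_nonneg fun _ _ => by positivity] at hsplit
  simp only [ofReal_norm_sq] at hsplit
  rw [← hv, ← ENNReal.sum_add_tsum_compl K, add_comm] at hsplit
  exact (ENNReal.add_right_inj (ENNReal.sum_ne_top.2 fun k _ => by finiteness)).1 hsplit

end OrthonormalSystems

section LayerCake

lemma integral_sqrt_zero_sq {a : ℝ} (ha : 0 ≤ a) : ∫ x in (0 : ℝ)..a ^ 2, √x = 2 / 3 * a ^ 3 := by
  simp only [sqrt_eq_rpow]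
  rw [integral_rpow (Or.inl (by norm_num)), zero_rpow (by norm_num), ← rpow_natCast, ← rpow_mul ha]
  norm_num
  rw [← rpow_natCast]
  ring_nf

lemma integral_sub_mul_sqrt_sq {r b : ℝ} (hr : 0 ≤ r) (hb : 0 < b) :
    ∫ t in (0 : ℝ)..(r / b) ^ 2, (r - b * √t) ^ 2 = r ^ 4 / (6 * b ^ 2) := by
  have hexpand : Set.EqOn (fun t => (r - b * √t) ^ 2) (fun t => r ^ 2 - 2 * r * b * √t + b ^ 2 * t)
      (Set.uIcc 0 ((r / b) ^ 2)) := fun t ht => by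
    rw [Set.uIcc_of_le (by positivity)] at ht
    linear_combination b ^ 2 * sq_sqrt ht.1
  rw [intervalIntegral.integral_congr hexpand,
    intervalIntegral.integral_add (Continuous.intervalIntegrable (by fun_prop) _ _)
      (Continuous.intervalIntegrable (by fun_prop) _ _),
    intervalIntegral.integral_sub (Continuous.intervalIntegrable (by fun_prop) _ _)
      (Continuous.intervalIntegrable (by fun_prop) _ _),
    intervalIntegral.integral_const_mul, intervalIntegral.integral_const_mul,
    integral_sqrt_zero_sq (by positivity), integral_id, intervalIntegral.integral_const]
  simp only [smul_eq_mul]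
  field_simp
  ring

lemma ofReal_pow_four_le_lintegral {r B : ℝ} (hr : 0 ≤ r) (hB : 0 < B) :
    ENNReal.ofReal (r ^ 4) ≤
      ENNReal.ofReal (6 * B) * ∫⁻ t in Set.Ioi 0, ENNReal.ofReal (max (r - √(B * t)) 0 ^ 2) := by
  have hb : 0 < √B := sqrt_pos.2 hB
  have hfour : r ^ 4 = 6 * B * ∫ t in (0 : ℝ)..(r / √B) ^ 2, (r - √B * √t) ^ 2 := by
    rw [integral_sub_mul_sqrt_sq hr hb, sq_sqrt hB.le]
    field_simp
  have hint : IntegrableOn (fun t => (r - √B * √t) ^ 2) (Set.Ioc 0 ((r / √B) ^ 2)) :=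
    Continuous.integrableOn_Ioc (by fun_prop)
  rw [hfour, ENNReal.ofReal_mul (by positivity), intervalIntegral.integral_of_le (by positivity),
    ofReal_integral_eq_lintegral_ofReal hint (Filter.Eventually.of_forall fun _ => sq_nonneg _)]
  refine mul_le_mul_right ?_ _
  refine le_trans (setLIntegral_mono' measurableSet_Ioc fun t ht => ?_)
    (lintegral_mono_set fun t ht => ht.1)
  have hle : √B * √t ≤ r := by
    rw [mul_comm, ← le_div_iff₀ hb]
    exact (sqrt_le_left (by positivity)).2 ht.2
  rw [sqrt_mul hB.le, max_eq_left (sub_nonneg.2 hle)]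

lemma setLIntegral_Ioi_zero_indicator_Iio (l : ℝ) (c : ENNReal) :
    ∫⁻ t in Set.Ioi 0, (Set.Iio l).indicator (fun _ => c) t = ENNReal.ofReal l * c := by
  rw [lintegral_indicator_const measurableSet_Iio, Measure.restrict_apply measurableSet_Iio,
    Set.inter_comm, Set.Ioi_inter_Iio, volume_Ioo, sub_zero, mul_comm]

lemma lintegral_ofReal_sq_le_lintegral_lintegral {X : Type*} [MeasurableSpace X] {μ : Measure X}
    [SFinite μ] {ρ : X → ℝ} (hρ : Measurable ρ) (hρ0 : ∀ x, 0 ≤ ρ x) {B : ℝ} (hB : 0 < B) :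
    ∫⁻ x, ENNReal.ofReal (ρ x ^ 2) ∂μ ≤ ENNReal.ofReal (6 * B) *
      ∫⁻ t in Set.Ioi (0 : ℝ), ∫⁻ x, ENNReal.ofReal (max (√(ρ x) - √(B * t)) 0 ^ 2) ∂μ := by
  have hpow : ∀ x, ρ x ^ 2 = √(ρ x) ^ 4 := fun x => by
    rw [show 4 = 2 * 2 from rfl, pow_mul, sq_sqrt (hρ0 x)]
  simp only [hpow]
  refine (lintegral_mono fun x => ofReal_pow_four_le_lintegral (sqrt_nonneg (ρ x)) hB).trans_eq ?_
  rw [lintegral_const_mul' _ _ ENNReal.ofReal_ne_top, lintegral_lintegral_swap]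
  fun_prop

lemma setLIntegral_Ioi_zero_tsum_indicator_Iio {ι : Type*} [Countable ι] (l : ι → ℝ)
    (c : ι → ENNReal) :
    ∫⁻ t in Set.Ioi 0, ∑' k, (Set.Iio (l k)).indicator (fun _ => c k) t =
      ∑' k, ENNReal.ofReal (l k) * c k := by
  rw [lintegral_tsum fun k => (measurable_const.indicator measurableSet_Iio).aemeasurable]
  simp only [setLIntegral_Ioi_zero_indicator_Iio]

end LayerCake

section Rumin

variable {𝕜 E X ι J : Type*} [RCLike 𝕜] [NormedAddCommGroup E] [InnerProductSpace 𝕜 E]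
  [MeasurableSpace X] {μ : Measure X} [Fintype J]

lemma max_sqrt_sum_norm_sq_sub_sq_le {a p : J → E} {b : ℝ} (hp : ∑ j, ‖p j‖ ^ 2 ≤ b) :
    max (√(∑ j, ‖a j‖ ^ 2) - √b) 0 ^ 2 ≤ ∑ j, ‖a j - p j‖ ^ 2 := by
  have hmink : √(∑ j, ‖a j‖ ^ 2) - √(∑ j, ‖p j‖ ^ 2) ≤ √(∑ j, ‖a j - p j‖ ^ 2) := by
    simpa only [PiLp.norm_eq_of_L2, WithLp.ofLp_sub, Pi.sub_apply] using
      norm_sub_norm_le (WithLp.toLp 2 a) (WithLp.toLp 2 p)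
  have hle : max (√(∑ j, ‖a j‖ ^ 2) - √b) 0 ≤ √(∑ j, ‖a j - p j‖ ^ 2) :=
    max_le (by linarith [sqrt_le_sqrt hp]) (sqrt_nonneg _)
  calc max (√(∑ j, ‖a j‖ ^ 2) - √b) 0 ^ 2 ≤ √(∑ j, ‖a j - p j‖ ^ 2) ^ 2 := by gcongr
    _ = ∑ j, ‖a j - p j‖ ^ 2 := sq_sqrt (by positivity)

lemma lintegral_enorm_sq_eq_enorm_sq (f : Lp E 2 μ) : ∫⁻ x, ‖f x‖ₑ ^ 2 ∂μ = ‖f‖ₑ ^ 2 := by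
  rw [Lp.enorm_def]
  simpa using (eLpNorm_nnreal_pow_eq_lintegral (f := f) (μ := μ) (two_ne_zero' NNReal)).symm

variable [FiniteDimensional 𝕜 E] {v : J → Lp E 2 μ} {e : ι → Lp E 2 μ}

-- The projections of the `v j` onto the span of `e k`, `k ∈ K`, have density at most that of the
-- `e k` themselves, by Bessel's inequality applied pointwise to the orthonormal family `v`.
lemma lintegral_max_sqrt_sum_norm_sq_sub_sq_le (hv : Orthonormal 𝕜 v) (he : Orthonormal 𝕜 e)
    (hcomplete : ∀ j, ∑' k, ‖inner 𝕜 (e k) (v j)‖ₑ ^ 2 = ‖v j‖ₑ ^ 2) (K : Finset ι) {b : ℝ}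
    (hb : ∀ᵐ x ∂μ, ∑ k ∈ K, ‖e k x‖ ^ 2 ≤ b) :
    ∫⁻ x, ENNReal.ofReal (max (√(∑ j, ‖v j x‖ ^ 2) - √b) 0 ^ 2) ∂μ ≤
      ∑ j, ∑' k : ((K : Set ι)ᶜ : Set ι), ‖inner 𝕜 (e k) (v j)‖ₑ ^ 2 := by
  set p : J → Lp E 2 μ := fun j => ∑ k ∈ K, inner 𝕜 (e k) (v j) • e k with hp
  have hpx : ∀ᵐ x ∂μ, ∀ j, p j x = ∑ k ∈ K, inner 𝕜 (e k) (v j) • e k x := by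
    refine ae_all_iff.2 fun j => ?_
    filter_upwards [Lp.coeFn_finsetSum K fun k => inner 𝕜 (e k) (v j) • e k,
      K.eventually_all.2 fun k _ => Lp.coeFn_smul (inner 𝕜 (e k) (v j)) (e k)] with x hsum hsmul
    simp only [hp, hsum, Finset.sum_apply]
    exact Finset.sum_congr rfl hsmul
  calc ∫⁻ x, ENNReal.ofReal (max (√(∑ j, ‖v j x‖ ^ 2) - √b) 0 ^ 2) ∂μ
      ≤ ∫⁻ x, ∑ j, ‖(v j - p j) x‖ₑ ^ 2 ∂μ := by
        refine lintegral_mono_ae ?_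
        filter_upwards [hb, hpx, ae_all_iff.2 fun j => Lp.coeFn_sub (v j) (p j)] with x hbx hpx hsub
        simp only [hsub, Pi.sub_apply, ← ofReal_norm_sq]
        rw [← ENNReal.ofReal_sum_of_nonneg fun _ _ => by positivity]
        refine ENNReal.ofReal_le_ofReal (max_sqrt_sum_norm_sq_sub_sq_le ?_)
        simp only [hpx]
        exact (sum_norm_sq_sum_inner_smul_le hv he K fun k => e k x).trans hbx
    _ = ∑ j, ‖v j - p j‖ₑ ^ 2 := by
        rw [lintegral_finsetSum' _ fun j _ =>
          (Lp.aestronglyMeasurable _).enorm.pow_const 2]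
        simp only [lintegral_enorm_sq_eq_enorm_sq]
    _ = ∑ j, ∑' k : ((K : Set ι)ᶜ : Set ι), ‖inner 𝕜 (e k) (v j)‖ₑ ^ 2 :=
        Finset.sum_congr rfl fun j _ => enorm_sq_sub_sum_inner_smul he K (hcomplete j)

theorem lintegral_sum_enorm_sq_sq_le [SFinite μ] [Countable ι] (hv : Orthonormal 𝕜 v)
    (he : Orthonormal 𝕜 e)
    (hcomplete : ∀ j, ∑' k, ‖inner 𝕜 (e k) (v j)‖ₑ ^ 2 = ‖v j‖ₑ ^ 2) {l : ι → ℝ} {B : ℝ}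
    (hB : 0 < B) (hfin : ∀ t, {k | l k ≤ t}.Finite)
    (hdensity : ∀ t > 0, ∀ K : Finset ι, (∀ k ∈ K, l k ≤ t) →
      ∀ᵐ x ∂μ, ∑ k ∈ K, ‖e k x‖ ^ 2 ≤ B * t) :
    ∫⁻ x, (∑ j, ‖v j x‖ₑ ^ 2) ^ 2 ∂μ ≤
      ENNReal.ofReal (6 * B) * ∑ j, ∑' k, ENNReal.ofReal (l k) * ‖inner 𝕜 (e k) (v j)‖ₑ ^ 2 := by
  have hhigh : ∀ t ∈ Set.Ioi (0 : ℝ),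
      ∫⁻ x, ENNReal.ofReal (max (√(∑ j, ‖v j x‖ ^ 2) - √(B * t)) 0 ^ 2) ∂μ ≤
        ∑ j, ∑' k, (Set.Iio (l k)).indicator (fun _ => ‖inner 𝕜 (e k) (v j)‖ₑ ^ 2) t := by
    intro t ht
    refine (lintegral_max_sqrt_sum_norm_sq_sub_sq_le hv he hcomplete (hfin t).toFinset
      (hdensity t ht _ fun k hk => (hfin t).mem_toFinset.1 hk)).trans_eq ?_
    refine Finset.sum_congr rfl fun j _ => ?_
    rw [tsum_subtype _ fun k => ‖inner 𝕜 (e k) (v j)‖ₑ ^ 2]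
    exact tsum_congr fun k => by simp [Set.indicator_apply]
  have hmeas : Measurable fun x => ∑ j, ‖v j x‖ ^ 2 :=
    Finset.measurable_fun_sum _ fun j _ => (Lp.stronglyMeasurable (v j)).norm.measurable.pow_const 2
  calc ∫⁻ x, (∑ j, ‖v j x‖ₑ ^ 2) ^ 2 ∂μ
      = ∫⁻ x, ENNReal.ofReal ((∑ j, ‖v j x‖ ^ 2) ^ 2) ∂μ := by
        refine lintegral_congr fun x => ?_
        rw [ENNReal.ofReal_pow (by positivity), ENNReal.ofReal_sum_of_nonneg fun _ _ => sq_nonneg _]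
        simp only [ofReal_norm_sq]
    _ ≤ ENNReal.ofReal (6 * B) * ∫⁻ t in Set.Ioi (0 : ℝ), ∫⁻ x,
          ENNReal.ofReal (max (√(∑ j, ‖v j x‖ ^ 2) - √(B * t)) 0 ^ 2) ∂μ :=
        lintegral_ofReal_sq_le_lintegral_lintegral hmeas (fun x => by positivity) hB
    _ ≤ ENNReal.ofReal (6 * B) * ∫⁻ t in Set.Ioi (0 : ℝ), ∑ j, ∑' k,
          (Set.Iio (l k)).indicator (fun _ => ‖inner 𝕜 (e k) (v j)‖ₑ ^ 2) t :=
        mul_le_mul_right (setLIntegral_mono' measurableSet_Ioi hhigh) _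
    _ = ENNReal.ofReal (6 * B) *
          ∑ j, ∑' k, ENNReal.ofReal (l k) * ‖inner 𝕜 (e k) (v j)‖ₑ ^ 2 := by
        rw [lintegral_finsetSum _ fun j _ => Measurable.tsum fun k =>
          measurable_const.indicator measurableSet_Iio]
        simp only [setLIntegral_Ioi_zero_tsum_indicator_Iio]

end Rumin

section LatticePoints

lemma trapezoid_le_integral_of_concaveOn {g : ℝ → ℝ} {a b : ℝ} (hab : a ≤ b)
    (hg : ConcaveOn ℝ (Set.Icc a b) g) (hcont : ContinuousOn g (Set.Icc a b)) :
    (b - a) * (g a + g b) / 2 ≤ ∫ x in a..b, g x := by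
  rcases hab.eq_or_lt with rfl | hlt
  · simp
  have hpos : 0 < b - a := sub_pos.2 hlt
  have hchord : ∫ x in a..b, (g a + (x - a) * ((g b - g a) / (b - a))) =
      (b - a) * (g a + g b) / 2 := by
    rw [intervalIntegral.integral_add (Continuous.intervalIntegrable (by fun_prop) _ _)
      (Continuous.intervalIntegrable (by fun_prop) _ _), intervalIntegral.integral_mul_const,
      intervalIntegral.integral_comp_sub_right fun x => x, integral_id,
      intervalIntegral.integral_const]
    simp only [smul_eq_mul, sub_self]
    field_simp
    ring
  rw [← hchord]
  refine intervalIntegral.integral_mono_on hab (Continuous.intervalIntegrable (by fun_prop) _ _)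
    (hcont.intervalIntegrable_of_Icc hab) fun x hx => ?_
  have hcomb := hg.2 (Set.left_mem_Icc.2 hab) (Set.right_mem_Icc.2 hab)
    (div_nonneg (sub_nonneg.2 hx.2) hpos.le) (div_nonneg (sub_nonneg.2 hx.1) hpos.le)
    (by field_simp; ring)
  have hx_eq : (b - x) / (b - a) * a + (x - a) / (b - a) * b = x := by field_simp; ring
  simp only [smul_eq_mul, hx_eq] at hcomb
  refine le_of_eq_of_le ?_ hcomb
  field_simp
  ring

lemma sum_le_integral_of_concaveOn {g : ℝ → ℝ} (n : ℕ) (hg : ConcaveOn ℝ (Set.Icc 0 (n : ℝ)) g)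
    (hcont : ContinuousOn g (Set.Icc 0 (n : ℝ))) :
    ∑ k ∈ Finset.range n, g (k + 1) + g 0 / 2 - g n / 2 ≤ ∫ x in (0 : ℝ)..n, g x := by
  have hsub : ∀ k < n, Set.Icc (k : ℝ) (k + 1 : ℕ) ⊆ Set.Icc 0 (n : ℝ) := fun k hk =>
    Set.Icc_subset_Icc k.cast_nonneg (Nat.cast_le.2 hk)
  have hle : ∀ k : ℕ, (k : ℝ) ≤ (k + 1 : ℕ) := fun k => Nat.cast_le.2 k.le_succ
  have htrap : ∑ k ∈ Finset.range n, (g k + g (k + 1)) / 2 ≤ ∫ x in (0 : ℝ)..n, g x := by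
    have hsplit := intervalIntegral.sum_integral_adjacent_intervals (a := Nat.cast) (μ := volume)
      fun k hk => (hcont.mono (hsub k hk)).intervalIntegrable_of_Icc (hle k)
    rw [Nat.cast_zero] at hsplit
    rw [← hsplit]
    refine Finset.sum_le_sum fun k hk => ?_
    have hk := hsub k (Finset.mem_range.1 hk)
    simpa using trapezoid_le_integral_of_concaveOn (hle k) (hg.subset hk (convex_Icc _ _))
      (hcont.mono hk)
  have htel := Finset.sum_range_sub (fun k : ℕ => g k) n
  simp only [Nat.cast_add, Nat.cast_one, Nat.cast_zero, Finset.sum_sub_distrib] at htel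
  rw [← Finset.sum_div, Finset.sum_add_distrib] at htrap
  linarith

lemma concaveOn_sqrt_sq_sub_sq (R : ℝ) :
    ConcaveOn ℝ (Set.Icc (-R) R) fun x => √(R ^ 2 - x ^ 2) := by
  have hinner : ConcaveOn ℝ (Set.Icc (-R) R) fun x => R ^ 2 - x ^ 2 :=
    (concaveOn_const _ (convex_Icc _ _)).sub
      ((even_two.convexOn_pow).subset (Set.subset_univ _) (convex_Icc _ _))
  have himage : (fun x => R ^ 2 - x ^ 2) '' Set.Icc (-R) R ⊆ Set.Ici 0 := by
    rintro _ ⟨x, hx, rfl⟩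
    exact sub_nonneg.2 (sq_le_sq' hx.1 hx.2)
  have hconvex : Convex ℝ ((fun x => R ^ 2 - x ^ 2) '' Set.Icc (-R) R) :=
    (isPreconnected_Icc.image _ (by fun_prop)).ordConnected.convex
  exact (strictConcaveOn_sqrt.concaveOn.subset himage hconvex).comp hinner
    (sqrt_monotone.monotoneOn _)

lemma integral_zero_sqrt_sq_sub_sq {R : ℝ} (hR : 0 < R) :
    ∫ x in (0 : ℝ)..R, √(R ^ 2 - x ^ 2) = π * R ^ 2 / 4 := by
  have hunit : ∫ x in (0 : ℝ)..1, √(1 - x ^ 2 : ℝ) = π / 4 := by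
    have hsplit := intervalIntegral.integral_add_adjacent_intervals (μ := volume)
      (Continuous.intervalIntegrable (by fun_prop : Continuous fun x : ℝ => √(1 - x ^ 2)) (-1) 0)
      (Continuous.intervalIntegrable (by fun_prop) 0 1)
    have hneg := intervalIntegral.integral_comp_neg (a := 0) (b := 1) fun x : ℝ => √(1 - x ^ 2)
    simp only [even_two.neg_pow, neg_zero] at hneg
    linarith [integral_sqrt_one_sub_sq]
  have hscale : ∀ x : ℝ, √(R ^ 2 - (R * x) ^ 2) = R * √(1 - x ^ 2) := fun x => by
    rw [show R ^ 2 - (R * x) ^ 2 = R ^ 2 * (1 - x ^ 2) by ring, sqrt_mul (by positivity),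
      sqrt_sq hR.le]
  have hsub := intervalIntegral.mul_integral_comp_mul_left (a := 0) (b := 1) (c := R)
    (f := fun x => √(R ^ 2 - x ^ 2))
  simp only [hscale, intervalIntegral.integral_const_mul, hunit, mul_zero, mul_one] at hsub
  linarith

lemma four_mul_sum_sqrt_le {R : ℝ} (hR : 0 < R) {n : ℕ} (hn : n ≤ R) :
    4 * ∑ k ∈ Finset.range n, √(R ^ 2 - (k + 1) ^ 2) ≤
      π * R ^ 2 - 2 * R + 2 * (1 - (R - n)) * √(R ^ 2 - n ^ 2) := by
  have hconc := concaveOn_sqrt_sq_sub_sq R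
  have hfull := sum_le_integral_of_concaveOn n
    (hconc.subset (Set.Icc_subset_Icc (by linarith) hn) (convex_Icc _ _)) (by fun_prop)
  have hlast := trapezoid_le_integral_of_concaveOn hn
    (hconc.subset (Set.Icc_subset_Icc (by linarith [n.cast_nonneg (α := ℝ)]) le_rfl)
      (convex_Icc _ _)) (by fun_prop)
  have hsplit := intervalIntegral.integral_add_adjacent_intervals (μ := volume)
    (Continuous.intervalIntegrable (by fun_prop : Continuous fun x : ℝ => √(R ^ 2 - x ^ 2)) 0 n)
    (Continuous.intervalIntegrable (by fun_prop) n R)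
  rw [integral_zero_sqrt_sq_sub_sq hR] at hsplit
  simp only [zero_pow two_ne_zero, sub_zero, sqrt_sq hR.le, sub_self, sqrt_zero] at hfull hlast
  linarith

lemma two_mul_one_sub_mul_le {n t g : ℝ} (hn : 2 ≤ n) (ht : 0 ≤ t) (ht1 : t ≤ 1)
    (hg : g ^ 2 = t * (2 * n + t)) : 2 * (1 - t) * g ≤ 2 * t + 0.3 * (n + t) ^ 2 := by
  have hamgm : 0.3 * n * g ≤ (0.15 * n) ^ 2 * (2 * n + t) + t := by
    refine le_of_mul_le_mul_right ?_ (by linarith : 0 < 2 * n + t)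
    linarith [sq_nonneg (0.15 * n * (2 * n + t) - g)]
  have hpoly : (1 - t) * ((0.15 * n) ^ 2 * (2 * n + t) + t) ≤
      0.15 * n * (2 * t + 0.3 * (n + t) ^ 2) := by
    nlinarith [mul_nonneg ht (sub_nonneg.2 hn), mul_nonneg (mul_nonneg ht (sub_nonneg.2 hn)) ht,
      mul_nonneg ht (sq_nonneg (n - 2)), mul_nonneg (mul_nonneg ht (sub_nonneg.2 hn)) (sq_nonneg n),
      sq_nonneg t, mul_nonneg (sq_nonneg t) (sub_nonneg.2 hn)]
  refine le_of_mul_le_mul_left ?_ (by linarith : 0 < 0.15 * n)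
  linarith [mul_le_mul_of_nonneg_left hamgm (sub_nonneg.2 ht1)]

lemma sum_four_mul_sqrt_add_two_le {R : ℝ} (hR : 0 < R) :
    ∑ k ∈ Finset.range ⌊R⌋₊, (4 * √(R ^ 2 - (k + 1) ^ 2) + 2) ≤ π ^ 3 / 9 * R ^ 2 := by
  have hpi : π + 0.3 ≤ π ^ 3 / 9 := by
    nlinarith [pi_gt_d4, mul_pos pi_pos pi_pos, sq_nonneg (π - 3.1415)]
  have hn := Nat.floor_le hR.le
  have hn1 := Nat.lt_floor_add_one R
  refine le_trans ?_ (mul_le_mul_of_nonneg_right hpi (sq_nonneg R))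
  rw [Finset.sum_add_distrib, ← Finset.mul_sum, Finset.sum_const, Finset.card_range, nsmul_eq_mul]
  rcases Nat.lt_or_ge ⌊R⌋₊ 2 with hsmall | hlarge
  · interval_cases ⌊R⌋₊
    · simp only [Finset.range_zero, Finset.sum_empty, mul_zero, Nat.cast_zero, zero_mul, add_zero]
      positivity
    · simp only [Nat.cast_one, Finset.range_one, Finset.sum_singleton, Nat.cast_zero, zero_add,
        one_pow] at hn ⊢
      have hsq := sq_sqrt (show 0 ≤ R ^ 2 - 1 by nlinarith)
      linarith [mul_le_mul_of_nonneg_right pi_gt_d4.le (sq_nonneg R),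
        sq_nonneg (3.4415 * √(R ^ 2 - 1) - 2)]
  · have hg := sq_sqrt (show 0 ≤ R ^ 2 - (⌊R⌋₊ : ℝ) ^ 2 from
      sub_nonneg.2 (pow_le_pow_left₀ (Nat.cast_nonneg _) hn 2))
    have hrem := two_mul_one_sub_mul_le (t := R - ⌊R⌋₊) (Nat.ofNat_le_cast.2 hlarge)
      (sub_nonneg.2 hn) (by linarith) (hg.trans (by ring))
    rw [add_sub_cancel] at hrem
    linarith [four_mul_sum_sqrt_le hR hn]

lemma card_le_of_abs_fst_le_of_natAbs_snd_eq {x : ℝ} (hx : 0 ≤ x) {d : ℕ} {K : Finset (ℤ × ℤ)}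
    (hK : ∀ k ∈ K, |(k.1 : ℝ)| ≤ x ∧ k.2.natAbs = d) : (K.card : ℝ) ≤ 4 * x + 2 := by
  have hsub : K ⊆ Finset.Icc (-⌊x⌋) ⌊x⌋ ×ˢ {(d : ℤ), -(d : ℤ)} := fun k hk => by
    obtain ⟨hfst, hsnd⟩ := hK k hk
    rw [← Int.cast_abs, ← Int.le_floor, abs_le] at hfst
    simp only [Finset.mem_product, Finset.mem_Icc, Finset.mem_insert, Finset.mem_singleton]
    exact ⟨hfst, by omega⟩
  have hfloor : 0 ≤ ⌊x⌋ := Int.floor_nonneg.2 hx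
  have hcard : (K.card : ℤ) ≤ (2 * ⌊x⌋ + 1) * 2 := by
    calc (K.card : ℤ) ≤ ((Finset.Icc (-⌊x⌋) ⌊x⌋).card * 2 : ℕ) := by
          refine Nat.cast_le.2 ((Finset.card_le_card hsub).trans ?_)
          rw [Finset.card_product]
          exact Nat.mul_le_mul_left _ Finset.card_le_two
      _ = (2 * ⌊x⌋ + 1) * 2 := by
          rw [Int.card_Icc]
          omega
  have hcast : (K.card : ℝ) ≤ (2 * ⌊x⌋ + 1) * 2 := by exact_mod_cast hcard
  linarith [Int.floor_le x]

lemma abs_le_sqrt_sub_sq_div {α r x y : ℝ} (hα : 0 < α) (h : α ^ 2 * x ^ 2 + y ^ 2 ≤ r) :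
    |x| ≤ √(r - y ^ 2) / α := by
  rw [le_div_iff₀ hα]
  refine le_sqrt_of_sq_le ?_
  rw [mul_pow, sq_abs]
  linarith

-- The constant is the one that turns into `π / 36` for `r = t / (2π / L) ^ 2`. The left side can be
-- close to `π r` for large `r`; the slack `π ^ 3 / 9 - π > 0.3` pays for the rounding in each row.
lemma card_mul_le_of_sq_mul_sq_add_sq_le {α r : ℝ} (hα0 : 0 < α) (hα1 : α ≤ 1) (hr : 0 < r)
    {K : Finset (ℤ × ℤ)} (hK : ∀ k ∈ K, k.2 ≠ 0 ∧ α ^ 2 * k.1 ^ 2 + k.2 ^ 2 ≤ r) :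
    K.card * α ≤ π ^ 3 / 9 * r := by
  set R := √r
  have hR2 : R ^ 2 = r := sq_sqrt hr.le
  have hmaps : ∀ k ∈ K, k.2.natAbs - 1 ∈ Finset.range ⌊R⌋₊ := fun k hk => by
    have hle : (k.2.natAbs : ℝ) ≤ R := by
      rw [Nat.cast_natAbs, Int.cast_abs]
      exact abs_le_sqrt (by linarith [(hK k hk).2, mul_nonneg (sq_nonneg α) (sq_nonneg (k.1 : ℝ))])
    have := Nat.le_floor hle
    have := (hK k hk).1
    simp only [Finset.mem_range]
    omega
  have hrow : ∀ d : ℕ, ((K.filter fun k => k.2.natAbs - 1 = d).card : ℝ) ≤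
      4 * (√(R ^ 2 - (d + 1) ^ 2) / α) + 2 := fun d => by
    refine card_le_of_abs_fst_le_of_natAbs_snd_eq (d := d + 1) (by positivity) fun k hk => ?_
    obtain ⟨hkK, hkd⟩ := Finset.mem_filter.1 hk
    obtain ⟨hk0, hkr⟩ := hK k hkK
    have hnat : k.2.natAbs = d + 1 := by omega
    have hsq : (k.2 : ℝ) ^ 2 = (d + 1) ^ 2 := by
      rw [← sq_abs, ← Int.cast_abs, ← Nat.cast_natAbs, hnat, Nat.cast_add, Nat.cast_one]
    rw [hR2, ← hsq]
    exact ⟨abs_le_sqrt_sub_sq_div hα0 hkr, hnat⟩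
  calc K.card * α
      ≤ (∑ d ∈ Finset.range ⌊R⌋₊, (4 * (√(R ^ 2 - (d + 1) ^ 2) / α) + 2)) * α := by
        rw [Finset.card_eq_sum_card_fiberwise hmaps, Nat.cast_sum]
        gcongr with d
        exact hrow d
    _ ≤ ∑ d ∈ Finset.range ⌊R⌋₊, (4 * √(R ^ 2 - (d + 1) ^ 2) + 2) := by
        rw [Finset.sum_mul]
        refine Finset.sum_le_sum fun d _ => ?_
        rw [add_mul, mul_assoc, div_mul_cancel₀ _ hα0.ne']
        linarith
    _ ≤ π ^ 3 / 9 * r := by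
        rw [← hR2]
        exact sum_four_mul_sqrt_add_two_le (sqrt_pos.2 hr)

end LatticePoints

section CircleFourier

open ComplexConjugate
open Complex (I)

/-- The exponential of frequency `n` on the circle of length `T`, normalised in `L²(0, T)`. -/
noncomputable def circleWave (T : ℝ) (n : ℤ) (t : ℝ) : ℂ := (√T)⁻¹ * fourier n (t : AddCircle T)

/-- The coefficient of `g` along `circleWave T n`, that is, their inner product in `L²(0, T)`. -/
noncomputable def circleCoeff (T : ℝ) (n : ℤ) (g : ℝ → ℂ) : ℂ :=
  ∫ t in (0 : ℝ)..T, conj (circleWave T n t) * g t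

variable {T : ℝ} (n : ℤ)

@[fun_prop]
lemma continuous_circleWave : Continuous (circleWave T n) :=
  continuous_const.mul ((map_continuous (fourier n)).comp (AddCircle.continuous_mk' T))

lemma conj_circleWave (t : ℝ) : conj (circleWave T n t) = circleWave T (-n) t := by
  rw [circleWave, circleWave, map_mul, fourier_neg, Complex.conj_ofReal]

lemma norm_circleWave (t : ℝ) : ‖circleWave T n t‖ = (√T)⁻¹ := by
  rw [circleWave, norm_mul, fourier_apply, Circle.norm_coe, mul_one, Complex.norm_real,
    norm_of_nonneg (inv_nonneg.2 (sqrt_nonneg T))]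

lemma hasDerivAt_circleWave (t : ℝ) :
    HasDerivAt (circleWave T n) (2 * π * I * n / T * circleWave T n t) t := by
  refine ((hasDerivAt_fourier T n t).const_mul (((√T)⁻¹ : ℝ) : ℂ)).congr_deriv ?_
  rw [circleWave]
  ring

lemma circleWave_period : circleWave T n T = circleWave T n 0 := by
  rw [circleWave, circleWave, AddCircle.coe_period, QuotientAddGroup.mk_zero]

lemma circleCoeff_const_mul (c : ℂ) (g : ℝ → ℂ) :
    circleCoeff T n (fun t => c * g t) = c * circleCoeff T n g := by
  simp only [circleCoeff, mul_left_comm _ c, intervalIntegral.integral_const_mul]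

lemma circleCoeff_of_hasDerivAt {g g' : ℝ → ℂ} (hg : ∀ t, HasDerivAt g (g' t) t)
    (hg' : Continuous g') (hper : g T = g 0) :
    circleCoeff T n g' = 2 * π * I * n / T * circleCoeff T n g := by
  simp only [circleCoeff, conj_circleWave]
  rw [intervalIntegral.integral_mul_deriv_eq_deriv_mul
    (fun t _ => hasDerivAt_circleWave (-n) t) (fun t _ => hg t)
    (Continuous.intervalIntegrable (by fun_prop) _ _) (hg'.intervalIntegrable _ _), hper,
    circleWave_period, sub_self, zero_sub, ← intervalIntegral.integral_neg,
    ← intervalIntegral.integral_const_mul]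
  refine intervalIntegral.integral_congr fun t _ => ?_
  push_cast
  ring

lemma circleCoeff_circleWave (hT : 0 < T) (l : ℤ) :
    circleCoeff T n (circleWave T l) = if n = l then 1 else 0 := by
  have hTC : (T : ℂ) ≠ 0 := Complex.ofReal_ne_zero.2 hT.ne'
  split_ifs with hnl
  · have hsq : ∀ t, conj (circleWave T n t) * circleWave T l t = (T : ℂ)⁻¹ := fun t => by
      rw [← hnl, Complex.conj_mul', norm_circleWave, ← Complex.ofReal_pow, inv_pow, sq_sqrt hT.le,
        Complex.ofReal_inv]
    simp only [circleCoeff, hsq, intervalIntegral.integral_const, sub_zero, Complex.real_smul]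
    exact mul_inv_cancel₀ hTC
  · have hderiv := circleCoeff_of_hasDerivAt n (hasDerivAt_circleWave l) (by fun_prop)
      (circleWave_period (T := T) l)
    rw [circleCoeff_const_mul, mul_eq_mul_right_iff] at hderiv
    refine hderiv.resolve_left fun heq => hnl ?_
    rw [div_left_inj' hTC, mul_right_inj' Complex.two_pi_I_ne_zero] at heq
    exact_mod_cast heq.symm

lemma norm_sq_circleCoeff (hT : 0 < T) (g : ℝ → ℂ) :
    ‖circleCoeff T n g‖ ^ 2 = T * ‖fourierCoeffOn hT g n‖ ^ 2 := by
  have hcoeff : circleCoeff T n g = ((√T)⁻¹ : ℝ) * (T * fourierCoeffOn hT g n) := by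
    simp only [fourierCoeffOn_eq_integral, circleCoeff, conj_circleWave, sub_zero]
    simp only [circleWave, mul_assoc, intervalIntegral.integral_const_mul, smul_eq_mul,
      Complex.real_smul, one_div, Complex.ofReal_inv]
    rw [mul_inv_cancel_left₀ (Complex.ofReal_ne_zero.2 hT.ne')]
    simp only [fourier_coe_apply, sub_zero]
  rw [hcoeff, norm_mul, norm_mul, Complex.norm_real, Complex.norm_real, norm_of_nonneg hT.le,
    norm_of_nonneg (by positivity), mul_pow, mul_pow, inv_pow, sq_sqrt hT.le]
  field_simp

lemma setLIntegral_enorm_sq_eq_tsum_circleCoeff (hT : 0 < T) {g : ℝ → ℂ} (hg : Continuous g) :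
    ∫⁻ t in Set.Ioc 0 T, ‖g t‖ₑ ^ 2 = ∑' n, ‖circleCoeff T n g‖ₑ ^ 2 := by
  have hmem : MemLp g 2 (volume.restrict (Set.Ioc 0 T)) :=
    (memLp_two_iff_integrable_sq_norm hg.aestronglyMeasurable).2
      (Continuous.integrableOn_Ioc (by fun_prop))
  have hsum := (hasSum_sq_fourierCoeffOn hT hmem).mul_left T
  rw [intervalIntegral.integral_of_le hT.le, sub_zero, smul_eq_mul,
    mul_inv_cancel_left₀ hT.ne'] at hsum
  simp only [← norm_sq_circleCoeff] at hsum
  simp only [← ofReal_norm_sq (E := ℂ)]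
  rw [← ofReal_integral_eq_lintegral_ofReal (Continuous.integrableOn_Ioc (by fun_prop))
      (Filter.Eventually.of_forall fun _ => sq_nonneg _), ← hsum.tsum_eq,
    ENNReal.ofReal_tsum_of_nonneg (fun _ => sq_nonneg _) hsum.summable]

end CircleFourier

section PlaneFourier

open ComplexConjugate
open Complex (I)

/-- The fundamental domain of the torus with periods `A` and `L`. -/
abbrev periodCell (A L : ℝ) : Set (ℝ × ℝ) := Set.Ioc 0 A ×ˢ Set.Ioc 0 L

/-- The exponential of frequency `k` on the torus with periods `A` and `L`, normalised in `L²`. -/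
noncomputable def planeWave (A L : ℝ) (k : ℤ × ℤ) (x : ℝ × ℝ) : ℂ :=
  circleWave A k.1 x.1 * circleWave L k.2 x.2

/-- The coefficient of `f` along `planeWave A L k`, that is, their inner product in `L²` of the
period cell. -/
noncomputable def planeCoeff (A L : ℝ) (k : ℤ × ℤ) (f : ℝ × ℝ → ℂ) : ℂ :=
  ∫ x in periodCell A L, conj (planeWave A L k x) * f x

lemma volume_restrict_periodCell (A L : ℝ) :
    (volume.restrict (periodCell A L) : Measure (ℝ × ℝ)) =
      (volume.restrict (Set.Ioc 0 A)).prod (volume.restrict (Set.Ioc 0 L)) := by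
  rw [Measure.prod_restrict, Measure.volume_eq_prod]

lemma integrableOn_periodCell {E : Type*} [NormedAddCommGroup E] {f : ℝ × ℝ → E} (A L : ℝ)
    (hf : Continuous f) : IntegrableOn f (periodCell A L) :=
  (hf.continuousOn.integrableOn_compact (isCompact_Icc.prod isCompact_Icc)).mono_set
    (Set.prod_mono Set.Ioc_subset_Icc_self Set.Ioc_subset_Icc_self)

variable {A L : ℝ} (k : ℤ × ℤ)

@[fun_prop]
lemma continuous_planeWave : Continuous (planeWave A L k) := by
  unfold planeWave
  fun_prop

lemma norm_sq_planeWave (hA : 0 < A) (hL : 0 < L) (x : ℝ × ℝ) :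
    ‖planeWave A L k x‖ ^ 2 = (A * L)⁻¹ := by
  rw [planeWave, norm_mul, norm_circleWave, norm_circleWave, mul_pow, inv_pow, inv_pow,
    sq_sqrt hA.le, sq_sqrt hL.le, mul_inv]

lemma continuous_circleCoeff_snd {f : ℝ × ℝ → ℂ} (hf : Continuous f) (n : ℤ) :
    Continuous fun s => circleCoeff L n fun t => f (s, t) := by
  unfold circleCoeff
  refine intervalIntegral.continuous_parametric_intervalIntegral_of_continuous' ?_ _ _
  fun_prop

lemma planeCoeff_eq_circleCoeff_circleCoeff (hA : 0 < A) (hL : 0 < L) {f : ℝ × ℝ → ℂ}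
    (hf : Continuous f) :
    planeCoeff A L k f = circleCoeff A k.1 fun s => circleCoeff L k.2 fun t => f (s, t) := by
  have hint := integrableOn_periodCell A L (f := fun x => conj (planeWave A L k x) * f x)
    (by fun_prop)
  rw [IntegrableOn, volume_restrict_periodCell] at hint
  rw [planeCoeff, volume_restrict_periodCell, integral_prod _ hint]
  simp only [circleCoeff, planeWave, map_mul, mul_assoc, integral_const_mul,
    intervalIntegral.integral_of_le hA.le, intervalIntegral.integral_of_le hL.le]

lemma planeCoeff_eq_circleCoeff_circleCoeff_swap (hA : 0 < A) (hL : 0 < L) {f : ℝ × ℝ → ℂ}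
    (hf : Continuous f) :
    planeCoeff A L k f = circleCoeff L k.2 fun t => circleCoeff A k.1 fun s => f (s, t) := by
  have hint := integrableOn_periodCell A L (f := fun x => conj (planeWave A L k x) * f x)
    (by fun_prop)
  rw [IntegrableOn, volume_restrict_periodCell] at hint
  rw [planeCoeff, volume_restrict_periodCell, integral_prod_symm _ hint]
  simp only [circleCoeff, planeWave, map_mul, mul_comm (conj (circleWave A _ _)), mul_assoc,
    integral_const_mul, intervalIntegral.integral_of_le hA.le,
    intervalIntegral.integral_of_le hL.le]

lemma planeCoeff_planeWave (hA : 0 < A) (hL : 0 < L) (l : ℤ × ℤ) :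
    planeCoeff A L k (planeWave A L l) = if k = l then 1 else 0 := by
  have hprod : planeCoeff A L k (planeWave A L l) =
      circleCoeff L k.2 (circleWave L l.2) * circleCoeff A k.1 (circleWave A l.1) := by
    rw [planeCoeff_eq_circleCoeff_circleCoeff k hA hL (continuous_planeWave l)]
    simp only [planeWave, circleCoeff_const_mul]
    simp only [mul_comm (circleWave A _ _), circleCoeff_const_mul]
  rw [hprod, circleCoeff_circleWave _ hL, circleCoeff_circleWave _ hA]
  simp only [Prod.ext_iff, ite_and, ite_mul, one_mul, zero_mul]
  split_ifs <;> rfl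

lemma planeCoeff_const_mul (c : ℂ) (f : ℝ × ℝ → ℂ) :
    planeCoeff A L k (fun x => c * f x) = c * planeCoeff A L k f := by
  simp only [planeCoeff, mul_left_comm _ c, integral_const_mul]

lemma setLIntegral_enorm_sq_eq_tsum_planeCoeff (hA : 0 < A) (hL : 0 < L) {f : ℝ × ℝ → ℂ}
    (hf : Continuous f) :
    ∫⁻ x in periodCell A L, ‖f x‖ₑ ^ 2 = ∑' k, ‖planeCoeff A L k f‖ₑ ^ 2 := by
  have hslice : ∀ n, Continuous fun s => circleCoeff L n fun t => f (s, t) :=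
    continuous_circleCoeff_snd hf
  calc ∫⁻ x in periodCell A L, ‖f x‖ₑ ^ 2
      = ∫⁻ s in Set.Ioc 0 A, ∫⁻ t in Set.Ioc 0 L, ‖f (s, t)‖ₑ ^ 2 := by
        rw [volume_restrict_periodCell, lintegral_prod _ (by fun_prop)]
    _ = ∫⁻ s in Set.Ioc 0 A, ∑' n, ‖circleCoeff L n fun t => f (s, t)‖ₑ ^ 2 :=
        lintegral_congr fun s => setLIntegral_enorm_sq_eq_tsum_circleCoeff hL (by fun_prop)
    _ = ∑' n, ∫⁻ s in Set.Ioc 0 A, ‖circleCoeff L n fun t => f (s, t)‖ₑ ^ 2 :=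
        lintegral_tsum fun n => ((hslice n).measurable.enorm.pow_const 2).aemeasurable
    _ = ∑' n, ∑' l, ‖circleCoeff A l fun s => circleCoeff L n fun t => f (s, t)‖ₑ ^ 2 :=
        tsum_congr fun n => setLIntegral_enorm_sq_eq_tsum_circleCoeff hA (hslice n)
    _ = ∑' k, ‖planeCoeff A L k f‖ₑ ^ 2 := by
        rw [ENNReal.tsum_comm, ENNReal.tsum_prod']
        simp only [planeCoeff_eq_circleCoeff_circleCoeff _ hA hL hf]

lemma planeCoeff_of_hasDerivAt_fst (hA : 0 < A) (hL : 0 < L) {f f' : ℝ × ℝ → ℂ}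
    (hf : Continuous f) (hf' : Continuous f')
    (hderiv : ∀ s t, HasDerivAt (fun s => f (s, t)) (f' (s, t)) s)
    (hper : ∀ t, f (A, t) = f (0, t)) :
    planeCoeff A L k f' = 2 * π * I * k.1 / A * planeCoeff A L k f := by
  have hslice : ∀ t, circleCoeff A k.1 (fun s => f' (s, t)) =
      2 * π * I * k.1 / A * circleCoeff A k.1 fun s => f (s, t) := fun t =>
    circleCoeff_of_hasDerivAt k.1 (fun s => hderiv s t) (by fun_prop) (hper t)
  simp only [planeCoeff_eq_circleCoeff_circleCoeff_swap k hA hL, hf, hf', hslice,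
    circleCoeff_const_mul]

lemma planeCoeff_of_hasDerivAt_snd (hA : 0 < A) (hL : 0 < L) {f f' : ℝ × ℝ → ℂ}
    (hf : Continuous f) (hf' : Continuous f')
    (hderiv : ∀ s t, HasDerivAt (fun t => f (s, t)) (f' (s, t)) t)
    (hper : ∀ s, f (s, L) = f (s, 0)) :
    planeCoeff A L k f' = 2 * π * I * k.2 / L * planeCoeff A L k f := by
  have hslice : ∀ s, circleCoeff L k.2 (fun t => f' (s, t)) =
      2 * π * I * k.2 / L * circleCoeff L k.2 fun t => f (s, t) := fun s =>
    circleCoeff_of_hasDerivAt k.2 (fun t => hderiv s t) (by fun_prop) (hper s)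
  simp only [planeCoeff_eq_circleCoeff_circleCoeff k hA hL, hf, hf', hslice,
    circleCoeff_const_mul]

lemma planeCoeff_eq_zero_of_integral_snd_eq_zero (hA : 0 < A) (hL : 0 < L) {f : ℝ × ℝ → ℂ}
    (hf : Continuous f) (hmean : ∀ s, ∫ t in (0 : ℝ)..L, f (s, t) = 0) {k : ℤ × ℤ}
    (hk : k.2 = 0) : planeCoeff A L k f = 0 := by
  rw [planeCoeff_eq_circleCoeff_circleCoeff k hA hL hf, hk]
  simp [circleCoeff, circleWave, hmean]

end PlaneFourier

section PartialDerivatives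

open Complex (I)

variable {f : ℝ × ℝ → ℝ}

lemma hasDerivAt_pd1 (hf : Differentiable ℝ f) (s t : ℝ) :
    HasDerivAt (fun s => f (s, t)) (pd1 f (s, t)) s :=
  DifferentiableAt.hasDerivAt (by fun_prop)

lemma hasDerivAt_pd2 (hf : Differentiable ℝ f) (s t : ℝ) :
    HasDerivAt (fun t => f (s, t)) (pd2 f (s, t)) t :=
  DifferentiableAt.hasDerivAt (by fun_prop)

lemma pd1_eq_fderiv (hf : Differentiable ℝ f) : pd1 f = fun x => fderiv ℝ f x (1, 0) := by
  ext ⟨s, t⟩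
  exact ((hf (s, t)).hasFDerivAt.comp_hasDerivAt s
    ((hasDerivAt_id s).prodMk (hasDerivAt_const s t))).deriv

lemma pd2_eq_fderiv (hf : Differentiable ℝ f) : pd2 f = fun x => fderiv ℝ f x (0, 1) := by
  ext ⟨s, t⟩
  exact ((hf (s, t)).hasFDerivAt.comp_hasDerivAt t
    ((hasDerivAt_const t s).prodMk (hasDerivAt_id t))).deriv

lemma continuous_pd1 (hf : ContDiff ℝ 1 f) : Continuous (pd1 f) := by
  rw [pd1_eq_fderiv (hf.differentiable one_ne_zero)]
  exact (hf.continuous_fderiv one_ne_zero).clm_apply continuous_const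

lemma continuous_pd2 (hf : ContDiff ℝ 1 f) : Continuous (pd2 f) := by
  rw [pd2_eq_fderiv (hf.differentiable one_ne_zero)]
  exact (hf.continuous_fderiv one_ne_zero).clm_apply continuous_const

variable {A L : ℝ}

lemma planeCoeff_pd1 (hA : 0 < A) (hL : 0 < L) (hf : ContDiff ℝ 1 f)
    (hper : ∀ x : ℝ × ℝ, f (x.1 + A, x.2) = f x) (k : ℤ × ℤ) :
    planeCoeff A L k (fun x => pd1 f x) =
      2 * π * I * k.1 / A * planeCoeff A L k (fun x => f x) := by
  have hcont := continuous_pd1 hf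
  refine planeCoeff_of_hasDerivAt_fst k hA hL (by fun_prop) (by fun_prop)
    (fun s t => (hasDerivAt_pd1 (hf.differentiable one_ne_zero) s t).ofReal_comp) fun t => ?_
  rw [← hper (0, t), zero_add]

lemma planeCoeff_pd2 (hA : 0 < A) (hL : 0 < L) (hf : ContDiff ℝ 1 f)
    (hper : ∀ x : ℝ × ℝ, f (x.1, x.2 + L) = f x) (k : ℤ × ℤ) :
    planeCoeff A L k (fun x => pd2 f x) =
      2 * π * I * k.2 / L * planeCoeff A L k (fun x => f x) := by
  have hcont := continuous_pd2 hf
  refine planeCoeff_of_hasDerivAt_snd k hA hL (by fun_prop) (by fun_prop)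
    (fun s t => (hasDerivAt_pd2 (hf.differentiable one_ne_zero) s t).ofReal_comp) fun s => ?_
  rw [← hper (s, 0), zero_add]

/-- The eigenvalue of `-Δ` on `planeWave A L k`. -/
noncomputable def laplaceEigenvalue (A L : ℝ) (k : ℤ × ℤ) : ℝ :=
  (2 * π * k.1 / A) ^ 2 + (2 * π * k.2 / L) ^ 2

lemma enorm_sq_two_pi_I_mul_div (n : ℤ) (T : ℝ) :
    ‖(2 * π * I * n / T : ℂ)‖ₑ ^ 2 = ENNReal.ofReal ((2 * π * n / T) ^ 2) := by
  have hfactor : (2 * π * I * n / T : ℂ) = (2 * π * n / T : ℝ) * I := by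
    push_cast
    ring
  rw [← ofReal_norm_sq, hfactor, norm_mul, Complex.norm_I, mul_one, Complex.norm_real, norm_eq_abs,
    sq_abs]

lemma ofReal_sq_eq_enorm_ofReal_sq (r : ℝ) : ENNReal.ofReal (r ^ 2) = ‖(r : ℂ)‖ₑ ^ 2 := by
  rw [← ofReal_norm_sq, Complex.norm_real, norm_eq_abs, sq_abs]

lemma setLIntegral_pd1_sq_add_pd2_sq_eq_tsum (hA : 0 < A) (hL : 0 < L) (hf : ContDiff ℝ 1 f)
    (hper1 : ∀ x : ℝ × ℝ, f (x.1 + A, x.2) = f x) (hper2 : ∀ x : ℝ × ℝ, f (x.1, x.2 + L) = f x) :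
    ∫⁻ x in periodCell A L, ENNReal.ofReal (pd1 f x ^ 2 + pd2 f x ^ 2) =
      ∑' k, ENNReal.ofReal (laplaceEigenvalue A L k) * ‖planeCoeff A L k (fun x => f x)‖ₑ ^ 2 := by
  have hcont1 := continuous_pd1 hf
  have hcont2 := continuous_pd2 hf
  calc ∫⁻ x in periodCell A L, ENNReal.ofReal (pd1 f x ^ 2 + pd2 f x ^ 2)
      = ∑' k, (‖planeCoeff A L k (fun x => pd1 f x)‖ₑ ^ 2 +
          ‖planeCoeff A L k (fun x => pd2 f x)‖ₑ ^ 2) := by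
        simp only [ENNReal.ofReal_add (sq_nonneg _) (sq_nonneg _), ofReal_sq_eq_enorm_ofReal_sq]
        rw [lintegral_add_left (by fun_prop), ENNReal.tsum_add,
          setLIntegral_enorm_sq_eq_tsum_planeCoeff hA hL (by fun_prop),
          setLIntegral_enorm_sq_eq_tsum_planeCoeff hA hL (by fun_prop)]
    _ = ∑' k, ENNReal.ofReal (laplaceEigenvalue A L k) *
          ‖planeCoeff A L k (fun x => f x)‖ₑ ^ 2 := by
        refine tsum_congr fun k => ?_
        rw [planeCoeff_pd1 hA hL hf hper1, planeCoeff_pd2 hA hL hf hper2, enorm_mul, enorm_mul,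
          mul_pow, mul_pow, ← add_mul, enorm_sq_two_pi_I_mul_div, enorm_sq_two_pi_I_mul_div,
          ← ENNReal.ofReal_add (sq_nonneg _) (sq_nonneg _), laplaceEigenvalue]

end PartialDerivatives

section ContinuousInL2

variable {𝕜 E : Type*} [RCLike 𝕜] [NormedAddCommGroup E] [InnerProductSpace 𝕜 E]
  {f g : ℝ × ℝ → E}

lemma memLp_two_periodCell (A L : ℝ) (hf : Continuous f) :
    MemLp f 2 (volume.restrict (periodCell A L)) :=
  (memLp_two_iff_integrable_sq_norm hf.aestronglyMeasurable).2
    (integrableOn_periodCell A L (by fun_prop))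

/-- The class of a continuous function in `L²` of the period cell. -/
noncomputable def periodCellLp (A L : ℝ) (hf : Continuous f) :
    Lp E 2 (volume.restrict (periodCell A L)) :=
  (memLp_two_periodCell A L hf).toLp f

lemma coeFn_periodCellLp (A L : ℝ) (hf : Continuous f) :
    periodCellLp A L hf =ᵐ[volume.restrict (periodCell A L)] f :=
  (memLp_two_periodCell A L hf).coeFn_toLp

lemma inner_periodCellLp (A L : ℝ) (hf : Continuous f) (hg : Continuous g) :
    inner 𝕜 (periodCellLp A L hf) (periodCellLp A L hg) =
      ∫ x in periodCell A L, inner 𝕜 (f x) (g x) := by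
  rw [L2.inner_def]
  refine integral_congr_ae ?_
  filter_upwards [coeFn_periodCellLp A L hf, coeFn_periodCellLp A L hg] with x hfx hgx
  rw [hfx, hgx]

lemma enorm_sq_periodCellLp (A L : ℝ) (hf : Continuous f) :
    ‖periodCellLp A L hf‖ₑ ^ 2 = ∫⁻ x in periodCell A L, ‖f x‖ₑ ^ 2 := by
  rw [← lintegral_enorm_sq_eq_enorm_sq]
  refine lintegral_congr_ae ?_
  filter_upwards [coeFn_periodCellLp A L hf] with x hfx
  rw [hfx]

end ContinuousInL2

section StokesModes

open ComplexConjugate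

variable {A L : ℝ}

/-- The unit vector orthogonal to the wave vector of frequency `k`; it is `0` for `k = 0`. -/
noncomputable def stokesDirection (A L : ℝ) (k : ℤ × ℤ) : EuclideanSpace ℂ (Fin 2) :=
  ((√(laplaceEigenvalue A L k))⁻¹ : ℂ) • !₂[-((2 * π * k.2 / L : ℝ) : ℂ), (2 * π * k.1 / A : ℝ)]

/-- The divergence-free plane wave of frequency `k`, an eigenfunction of the Stokes operator. -/
noncomputable def stokesMode (A L : ℝ) (k : ℤ × ℤ) (x : ℝ × ℝ) : EuclideanSpace ℂ (Fin 2) :=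
  planeWave A L k x • stokesDirection A L k

lemma laplaceEigenvalue_pos (hL : 0 < L) {k : ℤ × ℤ} (hk : k.2 ≠ 0) :
    0 < laplaceEigenvalue A L k := by
  have : (k.2 : ℝ) ≠ 0 := Int.cast_ne_zero.2 hk
  unfold laplaceEigenvalue
  positivity

lemma norm_stokesDirection (hL : 0 < L) {k : ℤ × ℤ} (hk : k.2 ≠ 0) :
    ‖stokesDirection A L k‖ = 1 := by
  have hpos := laplaceEigenvalue_pos (A := A) hL hk
  have hnorm : ‖!₂[-((2 * π * k.2 / L : ℝ) : ℂ), ((2 * π * k.1 / A : ℝ) : ℂ)]‖ =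
      √(laplaceEigenvalue A L k) := by
    rw [EuclideanSpace.norm_eq, Fin.sum_univ_two, laplaceEigenvalue, add_comm]
    simp only [Matrix.cons_val_zero, Matrix.cons_val_one, norm_neg, Complex.norm_real, norm_eq_abs,
      sq_abs]
  rw [stokesDirection, norm_smul, hnorm, norm_inv, Complex.norm_real,
    norm_of_nonneg (sqrt_nonneg _), inv_mul_cancel₀ (sqrt_ne_zero'.2 hpos)]

@[fun_prop]
lemma continuous_stokesMode (A L : ℝ) (k : ℤ × ℤ) : Continuous (stokesMode A L k) := by
  unfold stokesMode
  fun_prop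

lemma norm_sq_stokesMode (hA : 0 < A) (hL : 0 < L) {k : ℤ × ℤ} (hk : k.2 ≠ 0) (x : ℝ × ℝ) :
    ‖stokesMode A L k x‖ ^ 2 = (A * L)⁻¹ := by
  rw [stokesMode, norm_smul, norm_stokesDirection hL hk, mul_one, norm_sq_planeWave k hA hL]

/-- The Stokes mode of frequency `k` as an element of `L²` of the period cell. -/
noncomputable abbrev stokesModeLp (A L : ℝ) (k : ℤ × ℤ) :
    Lp (EuclideanSpace ℂ (Fin 2)) 2 (volume.restrict (periodCell A L)) :=
  periodCellLp A L (continuous_stokesMode A L k)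

lemma orthonormal_stokesModeLp (hA : 0 < A) (hL : 0 < L) :
    Orthonormal ℂ fun k : {k : ℤ × ℤ // k.2 ≠ 0} => stokesModeLp A L k := by
  refine orthonormal_iff_ite.2 fun k l => ?_
  have hinner : inner ℂ (stokesModeLp A L k) (stokesModeLp A L l) =
      inner ℂ (stokesDirection A L k) (stokesDirection A L l) *
        planeCoeff A L k (planeWave A L l) := by
    simp only [inner_periodCellLp, stokesMode, inner_smul_left, inner_smul_right, planeCoeff,
      ← integral_const_mul]
    exact integral_congr_ae (.of_forall fun x => by ring)
  simp only [hinner, planeCoeff_planeWave _ hA hL, ← Subtype.ext_iff]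
  split_ifs with hkl
  · rw [hkl, inner_self_eq_norm_sq_to_K, norm_stokesDirection hL l.2]
    norm_num
  · rw [mul_zero]

/-- A planar real vector field, viewed with values in the Hermitian space `ℂ²`. -/
noncomputable def complexField (v : ℝ × ℝ → ℝ × ℝ) (x : ℝ × ℝ) : EuclideanSpace ℂ (Fin 2) :=
  !₂[((v x).1 : ℂ), ((v x).2 : ℂ)]

variable {v : ℝ × ℝ → ℝ × ℝ}

lemma continuous_complexField (hv : Continuous v) : Continuous (complexField v) := by
  unfold complexField
  fun_prop

lemma enorm_sq_complexField (v : ℝ × ℝ → ℝ × ℝ) (x : ℝ × ℝ) :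
    ‖complexField v x‖ₑ ^ 2 = ENNReal.ofReal ((v x).1 ^ 2 + (v x).2 ^ 2) := by
  simp only [← ofReal_norm_sq, EuclideanSpace.norm_sq_eq, Fin.sum_univ_two, complexField,
    Matrix.cons_val_zero, Matrix.cons_val_one, Complex.norm_real, norm_eq_abs, sq_abs]

lemma inner_complexField (v w : ℝ × ℝ → ℝ × ℝ) (x : ℝ × ℝ) :
    inner ℂ (complexField v x) (complexField w x) =
      (((v x).1 * (w x).1 + (v x).2 * (w x).2 : ℝ) : ℂ) := by
  simp [complexField, PiLp.inner_apply, Fin.sum_univ_two, mul_comm]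

lemma norm_sq_mul_add_norm_sq_mul_eq (a b : ℝ) (z w : ℂ) :
    ‖(-b * z + a * w : ℂ)‖ ^ 2 + ‖(a * z + b * w : ℂ)‖ ^ 2 =
      (a ^ 2 + b ^ 2) * (‖z‖ ^ 2 + ‖w‖ ^ 2) := by
  simp only [Complex.sq_norm, Complex.normSq_apply, Complex.add_re, Complex.add_im, Complex.mul_re,
    Complex.mul_im, Complex.neg_re, Complex.neg_im, Complex.ofReal_re, Complex.ofReal_im]
  ring

lemma inner_stokesModeLp_complexField (k : ℤ × ℤ) (hv : Continuous v) :
    inner ℂ (stokesModeLp A L k) (periodCellLp A L (continuous_complexField hv)) =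
      ((√(laplaceEigenvalue A L k))⁻¹ : ℂ) *
        (-(2 * π * k.2 / L : ℝ) * planeCoeff A L k (fun x => (v x).1) +
          (2 * π * k.1 / A : ℝ) * planeCoeff A L k (fun x => (v x).2)) := by
  have hint : ∀ f : ℝ × ℝ → ℝ, Continuous f → ∀ c : ℂ,
      IntegrableOn (fun x => c * (conj (planeWave A L k x) * f x)) (periodCell A L) :=
    fun f hf c => integrableOn_periodCell A L (by fun_prop)
  rw [inner_periodCellLp, planeCoeff, planeCoeff, ← integral_const_mul, ← integral_const_mul,
    ← integral_add (hint _ (by fun_prop) _) (hint _ (by fun_prop) _), ← integral_const_mul]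
  refine integral_congr_ae (.of_forall fun x => ?_)
  simp only [stokesMode, stokesDirection, complexField, inner_smul_left, PiLp.inner_apply,
    Fin.sum_univ_two, Matrix.cons_val_zero, Matrix.cons_val_one, RCLike.inner_apply, map_neg,
    map_inv₀, Complex.conj_ofReal]
  ring

end StokesModes

section SolenoidalFields

/-- The fields of the theorem: `C¹`, periodic with periods `A` and `L`, divergence free, and of
mean zero along every line in the second direction. -/
structure IsSolenoidalField (A L : ℝ) (v : ℝ × ℝ → ℝ × ℝ) : Prop where
  contDiff : ContDiff ℝ 1 v
  periodic_fst : ∀ x : ℝ × ℝ, v (x.1 + A, x.2) = v x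
  periodic_snd : ∀ x : ℝ × ℝ, v (x.1, x.2 + L) = v x
  div_eq_zero : ∀ x, pd1 (fun y => (v y).1) x + pd2 (fun y => (v y).2) x = 0
  integral_snd_eq_zero : ∀ s, ∫ t in (0 : ℝ)..L, v (s, t) = 0

namespace IsSolenoidalField

variable {A L : ℝ} {v : ℝ × ℝ → ℝ × ℝ}

lemma mul_planeCoeff_add_mul_planeCoeff_eq_zero (hv : IsSolenoidalField A L v) (hA : 0 < A)
    (hL : 0 < L) (k : ℤ × ℤ) :
    (2 * π * k.1 / A : ℝ) * planeCoeff A L k (fun x => (v x).1) +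
      (2 * π * k.2 / L : ℝ) * planeCoeff A L k (fun x => (v x).2) = 0 := by
  have hdiv : (fun x => (pd1 (fun y => (v y).1) x : ℂ)) =
      fun x => -1 * (pd2 (fun y => (v y).2) x : ℂ) := by
    ext x
    rw [eq_neg_of_add_eq_zero_left (hv.div_eq_zero x), Complex.ofReal_neg, neg_one_mul]
  have hcoeff := planeCoeff_pd1 hA hL hv.contDiff.fst
    (fun x => congrArg Prod.fst (hv.periodic_fst x)) k
  rw [hdiv, planeCoeff_const_mul, planeCoeff_pd2 hA hL hv.contDiff.snd
    (fun x => congrArg Prod.snd (hv.periodic_snd x))] at hcoeff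
  refine mul_left_cancel₀ Complex.I_ne_zero ?_
  push_cast
  linear_combination -hcoeff

lemma enorm_sq_inner_stokesModeLp (hv : IsSolenoidalField A L v) (hA : 0 < A) (hL : 0 < L)
    {k : ℤ × ℤ} (hk : k.2 ≠ 0) :
    ‖inner ℂ (stokesModeLp A L k)
        (periodCellLp A L (continuous_complexField hv.contDiff.continuous))‖ₑ ^ 2 =
      ‖planeCoeff A L k (fun x => (v x).1)‖ₑ ^ 2 + ‖planeCoeff A L k (fun x => (v x).2)‖ₑ ^ 2 := by
  have hpos := laplaceEigenvalue_pos (A := A) hL hk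
  have hlagrange := norm_sq_mul_add_norm_sq_mul_eq (2 * π * k.1 / A) (2 * π * k.2 / L)
    (planeCoeff A L k fun x => (v x).1) (planeCoeff A L k fun x => (v x).2)
  rw [hv.mul_planeCoeff_add_mul_planeCoeff_eq_zero hA hL, norm_zero, zero_pow two_ne_zero, add_zero,
    ← laplaceEigenvalue] at hlagrange
  simp only [← ofReal_norm_sq (E := ℂ)]
  rw [← ENNReal.ofReal_add (sq_nonneg _) (sq_nonneg _),
    inner_stokesModeLp_complexField _ hv.contDiff.continuous, norm_mul, mul_pow, hlagrange,
    norm_inv, Complex.norm_real, norm_of_nonneg (sqrt_nonneg _), inv_pow, sq_sqrt hpos.le,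
    inv_mul_cancel_left₀ hpos.ne']

lemma planeCoeff_eq_zero (hv : IsSolenoidalField A L v) (hA : 0 < A) (hL : 0 < L) {k : ℤ × ℤ}
    (hk : k.2 = 0) :
    planeCoeff A L k (fun x => (v x).1) = 0 ∧ planeCoeff A L k (fun x => (v x).2) = 0 := by
  have hcont := hv.contDiff.continuous
  have hint : ∀ s, IntervalIntegrable (fun t => v (s, t)) volume 0 L := fun s =>
    Continuous.intervalIntegrable (by fun_prop) _ _
  refine ⟨planeCoeff_eq_zero_of_integral_snd_eq_zero hA hL (by fun_prop) (fun s => ?_) hk,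
    planeCoeff_eq_zero_of_integral_snd_eq_zero hA hL (by fun_prop) (fun s => ?_) hk⟩
  · have hfst := (ContinuousLinearMap.fst ℝ ℝ ℝ).intervalIntegral_comp_comm (hint s)
    rw [hv.integral_snd_eq_zero, map_zero] at hfst
    rw [intervalIntegral.integral_ofReal]
    exact congrArg _ hfst
  · have hsnd := (ContinuousLinearMap.snd ℝ ℝ ℝ).intervalIntegral_comp_comm (hint s)
    rw [hv.integral_snd_eq_zero, map_zero] at hsnd
    rw [intervalIntegral.integral_ofReal]
    exact congrArg _ hsnd

lemma tsum_mul_enorm_sq_inner_stokesModeLp (hv : IsSolenoidalField A L v) (hA : 0 < A) (hL : 0 < L)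
    (c : ℤ × ℤ → ENNReal) :
    ∑' k : {k : ℤ × ℤ // k.2 ≠ 0}, c k * ‖inner ℂ (stokesModeLp A L k)
        (periodCellLp A L (continuous_complexField hv.contDiff.continuous))‖ₑ ^ 2 =
      ∑' k, c k * ‖planeCoeff A L k (fun x => (v x).1)‖ₑ ^ 2 +
        ∑' k, c k * ‖planeCoeff A L k (fun x => (v x).2)‖ₑ ^ 2 := by
  rw [← ENNReal.tsum_add, ← tsum_subtype_eq_of_support_subset (s := {k : ℤ × ℤ | k.2 ≠ 0})]
  · exact tsum_congr fun k => by rw [hv.enorm_sq_inner_stokesModeLp hA hL k.2, mul_add]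
  · intro k hk hk0
    obtain ⟨hfst, hsnd⟩ := hv.planeCoeff_eq_zero hA hL hk0
    simp [hfst, hsnd] at hk

lemma tsum_enorm_sq_inner_stokesModeLp (hv : IsSolenoidalField A L v) (hA : 0 < A) (hL : 0 < L) :
    ∑' k : {k : ℤ × ℤ // k.2 ≠ 0}, ‖inner ℂ (stokesModeLp A L k)
        (periodCellLp A L (continuous_complexField hv.contDiff.continuous))‖ₑ ^ 2 =
      ‖periodCellLp A L (continuous_complexField hv.contDiff.continuous)‖ₑ ^ 2 := by
  have hcont := hv.contDiff.continuous
  have htsum := hv.tsum_mul_enorm_sq_inner_stokesModeLp hA hL fun _ => 1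
  simp only [one_mul] at htsum
  rw [htsum, enorm_sq_periodCellLp, ← setLIntegral_enorm_sq_eq_tsum_planeCoeff hA hL (by fun_prop),
    ← setLIntegral_enorm_sq_eq_tsum_planeCoeff hA hL (by fun_prop),
    ← lintegral_add_left (by fun_prop)]
  simp only [enorm_sq_complexField, ENNReal.ofReal_add (sq_nonneg _) (sq_nonneg _),
    ofReal_sq_eq_enorm_ofReal_sq]

lemma continuous_gradSq (hv : IsSolenoidalField A L v) : Continuous (gradSq v) := by
  have := continuous_pd1 hv.contDiff.fst
  have := continuous_pd2 hv.contDiff.fst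
  have := continuous_pd1 hv.contDiff.snd
  have := continuous_pd2 hv.contDiff.snd
  unfold gradSq
  fun_prop

lemma tsum_laplaceEigenvalue_mul_enorm_sq_inner (hv : IsSolenoidalField A L v) (hA : 0 < A)
    (hL : 0 < L) :
    ∑' k : {k : ℤ × ℤ // k.2 ≠ 0}, ENNReal.ofReal (laplaceEigenvalue A L k) *
        ‖inner ℂ (stokesModeLp A L k)
          (periodCellLp A L (continuous_complexField hv.contDiff.continuous))‖ₑ ^ 2 =
      ENNReal.ofReal (∫ x in periodCell A L, gradSq v x) := by
  have := continuous_pd1 hv.contDiff.fst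
  have := continuous_pd2 hv.contDiff.fst
  rw [hv.tsum_mul_enorm_sq_inner_stokesModeLp hA hL fun k => .ofReal (laplaceEigenvalue A L k),
    ← setLIntegral_pd1_sq_add_pd2_sq_eq_tsum hA hL hv.contDiff.fst
      (fun x => congrArg Prod.fst (hv.periodic_fst x))
      (fun x => congrArg Prod.fst (hv.periodic_snd x)),
    ← setLIntegral_pd1_sq_add_pd2_sq_eq_tsum hA hL hv.contDiff.snd
      (fun x => congrArg Prod.snd (hv.periodic_fst x))
      (fun x => congrArg Prod.snd (hv.periodic_snd x)),
    ← lintegral_add_left (by fun_prop),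
    ofReal_integral_eq_lintegral_ofReal (integrableOn_periodCell A L hv.continuous_gradSq)
      (.of_forall fun x => by unfold gradSq; positivity)]
  refine lintegral_congr fun x => ?_
  rw [← ENNReal.ofReal_add (by positivity) (by positivity), gradSq, ← add_assoc]

end IsSolenoidalField

lemma orthonormal_complexField {J : Type*} [DecidableEq J] {A L : ℝ} {v : J → ℝ × ℝ → ℝ × ℝ}
    (hv : ∀ j, Continuous (v j))
    (hortho : ∀ i j, ∫ x in periodCell A L, ((v i x).1 * (v j x).1 + (v i x).2 * (v j x).2) =
      if i = j then 1 else 0) :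
    Orthonormal ℂ fun j => periodCellLp A L (continuous_complexField (hv j)) := by
  refine orthonormal_iff_ite.2 fun i j => ?_
  simp only [inner_periodCellLp, inner_complexField]
  rw [integral_complex_ofReal, hortho]
  split_ifs <;> norm_num

end SolenoidalFields

section SpectralDensity

lemma finite_setOf_two_pi_mul_div_sq_le {T : ℝ} (hT : 0 < T) (t : ℝ) :
    {n : ℤ | (2 * π * n / T) ^ 2 ≤ t}.Finite := by
  refine (Set.finite_Icc (-⌊√t * T / (2 * π)⌋) ⌊√t * T / (2 * π)⌋).subset fun n hn => ?_
  have habs : |2 * π * n / T| ≤ √t := abs_le_sqrt hn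
  rw [abs_div, abs_mul, abs_of_pos two_pi_pos, abs_of_pos hT, div_le_iff₀ hT, mul_comm,
    ← le_div_iff₀ two_pi_pos, ← Int.cast_abs, ← Int.le_floor] at habs
  exact abs_le.1 habs

lemma finite_setOf_laplaceEigenvalue_le {A L : ℝ} (hA : 0 < A) (hL : 0 < L) (t : ℝ) :
    {k | laplaceEigenvalue A L k ≤ t}.Finite :=
  ((finite_setOf_two_pi_mul_div_sq_le hA t).prod (finite_setOf_two_pi_mul_div_sq_le hL t)).subset
    fun k (hk : (2 * π * k.1 / A) ^ 2 + (2 * π * k.2 / L) ^ 2 ≤ t) =>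
      ⟨le_of_add_le_of_nonneg_left hk (sq_nonneg _), le_of_add_le_of_nonneg_right hk (sq_nonneg _)⟩

variable {L α : ℝ}

lemma laplaceEigenvalue_elongated (L α : ℝ) (k : ℤ × ℤ) :
    laplaceEigenvalue (L / α) L k = (2 * π / L) ^ 2 * (α ^ 2 * k.1 ^ 2 + k.2 ^ 2) := by
  rw [laplaceEigenvalue]
  field_simp

lemma sum_norm_sq_stokesMode_le (hL : 0 < L) (hα0 : 0 < α) (hα1 : α ≤ 1) {t : ℝ} (ht : 0 < t)
    {K : Finset {k : ℤ × ℤ // k.2 ≠ 0}} (hK : ∀ k ∈ K, laplaceEigenvalue (L / α) L k ≤ t)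
    (x : ℝ × ℝ) : ∑ k ∈ K, ‖stokesMode (L / α) L k x‖ ^ 2 ≤ π / 36 * t := by
  have hlattice : ∀ k ∈ K.map (Function.Embedding.subtype _),
      k.2 ≠ 0 ∧ α ^ 2 * k.1 ^ 2 + k.2 ^ 2 ≤ t / (2 * π / L) ^ 2 := fun k hk => by
    obtain ⟨k, hkK, rfl⟩ := Finset.mem_map.1 hk
    rw [le_div_iff₀' (by positivity), ← laplaceEigenvalue_elongated]
    exact ⟨k.2, hK k hkK⟩
  have hcount := card_mul_le_of_sq_mul_sq_add_sq_le hα0 hα1 (by positivity) hlattice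
  rw [Finset.card_map] at hcount
  calc ∑ k ∈ K, ‖stokesMode (L / α) L k x‖ ^ 2
      = K.card * α / L ^ 2 := by
        rw [Finset.sum_congr rfl fun k _ => norm_sq_stokesMode (div_pos hL hα0) hL k.2 x,
          Finset.sum_const, nsmul_eq_mul]
        field_simp
    _ ≤ π ^ 3 / 9 * (t / (2 * π / L) ^ 2) / L ^ 2 := by gcongr
    _ = π / 36 * t := by
        field_simp
        norm_num

end SpectralDensity

section LiebThirring

variable {J : Type*} [Fintype J] {L α : ℝ} {v : J → ℝ × ℝ → ℝ × ℝ}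

lemma lintegral_sum_enorm_sq_sq_periodCellLp {A : ℝ} (hv : ∀ j, Continuous (v j)) :
    ∫⁻ x in periodCell A L,
        (∑ j, ‖periodCellLp A L (continuous_complexField (hv j)) x‖ₑ ^ 2) ^ 2 =
      ENNReal.ofReal (∫ x in periodCell A L, (∑ j, ((v j x).1 ^ 2 + (v j x).2 ^ 2)) ^ 2) := by
  rw [ofReal_integral_eq_lintegral_ofReal (integrableOn_periodCell A L (by fun_prop))
    (.of_forall fun _ => sq_nonneg _)]
  refine lintegral_congr_ae ?_
  filter_upwards [ae_all_iff.2 fun j => coeFn_periodCellLp A L (continuous_complexField (hv j))]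
    with x hx
  simp only [hx, enorm_sq_complexField]
  rw [← ENNReal.ofReal_sum_of_nonneg fun _ _ => by positivity,
    ENNReal.ofReal_pow (Finset.sum_nonneg fun _ _ => by positivity)]

lemma ofReal_integral_density_sq_le (hL : 0 < L) (hα0 : 0 < α) (hα1 : α ≤ 1)
    (hv : ∀ j, IsSolenoidalField (L / α) L (v j))
    (hortho : Orthonormal ℂ fun j =>
      periodCellLp (L / α) L (continuous_complexField (hv j).contDiff.continuous)) :
    ENNReal.ofReal (∫ x in periodCell (L / α) L, (∑ j, ((v j x).1 ^ 2 + (v j x).2 ^ 2)) ^ 2) ≤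
      ENNReal.ofReal (π / 6) *
        ∑ j, ENNReal.ofReal (∫ x in periodCell (L / α) L, gradSq (v j) x) := by
  have hA : 0 < L / α := div_pos hL hα0
  have hrumin := lintegral_sum_enorm_sq_sq_le hortho (orthonormal_stokesModeLp hA hL)
    (fun j => (hv j).tsum_enorm_sq_inner_stokesModeLp hA hL)
    (l := fun k => laplaceEigenvalue (L / α) L k) (B := π / 36) (by positivity)
    (fun t => (finite_setOf_laplaceEigenvalue_le hA hL t).preimage Subtype.val_injective.injOn)
    fun t ht K hK => by
      filter_upwards [K.eventually_all.2 fun k _ => coeFn_periodCellLp (L / α) L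
        (continuous_stokesMode (L / α) L k)] with x hx
      refine le_of_eq_of_le (Finset.sum_congr rfl fun k hk => ?_)
        (sum_norm_sq_stokesMode_le hL hα0 hα1 ht hK x)
      rw [hx k hk]
  rw [lintegral_sum_enorm_sq_sq_periodCellLp fun j => (hv j).contDiff.continuous,
    show 6 * (π / 36) = π / 6 by ring] at hrumin
  simpa only [(hv _).tsum_laplaceEigenvalue_mul_enorm_sq_inner hA hL] using hrumin

end LiebThirring

theorem stmt_18 (L α : ℝ) (hL : 0 < L) (hα0 : 0 < α) (hα1 : α ≤ 1)
    (m : ℕ) (v : Fin m → ℝ × ℝ → ℝ × ℝ)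
    (hC1 : ∀ j, ContDiff ℝ 1 (v j))
    (hper1 : ∀ j (x : ℝ × ℝ), v j (x.1 + L / α, x.2) = v j x)
    (hper2 : ∀ j (x : ℝ × ℝ), v j (x.1, x.2 + L) = v j x)
    (hdiv : ∀ j x, pd1 (fun y => (v j y).1) x + pd2 (fun y => (v j y).2) x = 0)
    (hmean : ∀ j (x₁ : ℝ), (∫ t in (0:ℝ)..L, v j (x₁, t)) = 0)
    (hortho : ∀ i j, (∫ x in Set.Ioc (0:ℝ) (L / α) ×ˢ Set.Ioc (0:ℝ) L,
        ((v i x).1 * (v j x).1 + (v i x).2 * (v j x).2)) = if i = j then 1 else 0) :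
    (∫ x in Set.Ioc (0:ℝ) (L / α) ×ˢ Set.Ioc (0:ℝ) L,
        (∑ j, ((v j x).1 ^ 2 + (v j x).2 ^ 2)) ^ 2) ≤
      (π / 6) * ∑ j, ∫ x in Set.Ioc (0:ℝ) (L / α) ×ˢ Set.Ioc (0:ℝ) L, gradSq (v j) x := by
  have hv : ∀ j, IsSolenoidalField (L / α) L (v j) := fun j =>
    ⟨hC1 j, hper1 j, hper2 j, hdiv j, hmean j⟩
  have hgrad : ∀ j, 0 ≤ ∫ x in periodCell (L / α) L, gradSq (v j) x := fun j =>
    integral_nonneg fun x => by unfold gradSq; positivity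
  have hle := ofReal_integral_density_sq_le hL hα0 hα1 hv
    (orthonormal_complexField (fun j => (hC1 j).continuous) hortho)
  rw [← ENNReal.ofReal_sum_of_nonneg fun j _ => hgrad j,
    ← ENNReal.ofReal_mul (by positivity)] at hle
  exact (ENNReal.ofReal_le_ofReal_iff
    (mul_nonneg (by positivity) (Finset.sum_nonneg fun j _ => hgrad j))).1 hle
end

section
/- Let L > 0, 0 < α ≤ 1, and consider the elongated torus T²_α = (0, L/α) × (0, L). Let w_1, …, w_m : ℝ² → ℝ² be C¹ vector fields, periodic with period L/α in x_1 and period L in x_2, each depending only on the variable x_1, with div w_j = 0 on ℝ², with ∫_{T²_α} w_j(x) dx = 0, and orthonormal in L²(T²_α; ℝ²), i.e. ∫_{T²_α} ⟨w_i(x), w_j(x)⟩ dx = δ_{ij}. Then ρ(x) := ∑_{j=1}^m |w_j(x)|² satisfies ∫_{T²_α} ρ(x)² dx ≤ (6/L) ∑_{j=1}^m ( ∫_{T²_α} |∇w_j(x)|² dx )^{1/2}. -/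
open Real MeasureTheory

/-!
A mean-zero divergence-free field depending on `x₁` only is a shear `(0, g(x₁))`, so the claim is
one-dimensional: `∫ ρ² ≤ 6 ∑ ‖∂g_j‖` for an orthonormal family of mean-zero `ℓ`-periodic functions
`g_j` and `ρ = ∑ g_j²`. Let `a_j(t, x)` be the mean of `g_j` over the interval of length
`h = min (1 / t²) ℓ` centred at `x`. Bessel's inequality for the indicator of that interval gives
`∑ a_j² ≤ 1 / h`, and `a_j = 0` when `h = ℓ`, so `∑ a_j² ≤ t²` for every `t`. The triangle
inequality `√ρ - t ≤ (∑ (g_j - a_j)²)^(1/2)`, integrated against `2t dt` over `0 < t < √ρ`, yields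
`ρ² / 6 ≤ ∑ ∫ 2t (g_j - a_j)² dt`. Finally `‖g_j - a_j‖²` is at most `4` and, by symmetry of the
averaging interval, at most `‖∂g_j‖² / (16 t⁴)`; splitting the `t`-integral at the optimal level
bounds the `j`-th term by `‖∂g_j‖`.
-/

theorem sq_integral_mul_le_integral_mul_integral_mul_sq {X : Type*} [MeasurableSpace X]
    {μ : Measure X} {k φ : X → ℝ} (hk_nonneg : 0 ≤ᵐ[μ] k) (hk : Integrable k μ)
    (hkφ : Integrable (fun x ↦ k x * φ x) μ) (hkφ_sq : Integrable (fun x ↦ k x * φ x ^ 2) μ) :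
    (∫ x, k x * φ x ∂μ) ^ 2 ≤ (∫ x, k x ∂μ) * ∫ x, k x * φ x ^ 2 ∂μ := by
  have quadratic_nonneg (t : ℝ) :
      0 ≤ (∫ x, k x ∂μ) * (t * t) + 2 * (∫ x, k x * φ x ∂μ) * t + ∫ x, k x * φ x ^ 2 ∂μ := by
    calc 0 ≤ ∫ x, k x * (t + φ x) ^ 2 ∂μ :=
          integral_nonneg_of_ae (hk_nonneg.mono fun x hx ↦ mul_nonneg hx (sq_nonneg _))
      _ = ∫ x, t * t * k x + 2 * t * (k x * φ x) + k x * φ x ^ 2 ∂μ := by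
          congr with x; ring
      _ = _ := by
          rw [integral_add (by fun_prop) hkφ_sq, integral_add (by fun_prop) (by fun_prop),
            integral_const_mul, integral_const_mul]
          ring
  have := discrim_le_zero quadratic_nonneg
  rw [discrim] at this
  linarith

theorem sum_sq_integral_mul_le_integral_sq {X ι : Type*} [MeasurableSpace X] [Fintype ι]
    [DecidableEq ι] {μ : Measure X} {f : X → ℝ} {g : ι → X → ℝ} (hf : MemLp f 2 μ)
    (hg : ∀ j, MemLp (g j) 2 μ)
    (horth : ∀ i j, ∫ x, g i x * g j x ∂μ = if i = j then 1 else 0) :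
    ∑ j, (∫ x, g j x * f x ∂μ) ^ 2 ≤ ∫ x, f x ^ 2 ∂μ := by
  have inner_toLp {p q : X → ℝ} (hp : MemLp p 2 μ) (hq : MemLp q 2 μ) :
      inner ℝ (hp.toLp p) (hq.toLp q) = ∫ x, p x * q x ∂μ := by
    rw [L2.inner_def]
    refine integral_congr_ae ?_
    filter_upwards [hp.coeFn_toLp, hq.coeFn_toLp] with x hpx hqx
    simp [hpx, hqx, mul_comm]
  have orthonormal : Orthonormal ℝ fun j ↦ (hg j).toLp (g j) := by
    rw [orthonormal_iff_ite]
    exact fun i j ↦ (inner_toLp _ _).trans (horth i j)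
  have bessel := orthonormal.sum_inner_products_le (x := hf.toLp f) (s := .univ)
  simpa only [inner_toLp, ← real_inner_self_eq_norm_sq, Real.norm_eq_abs, sq_abs, ← pow_two]
    using bessel

theorem sum_sq_setIntegral_le_measureReal {X ι : Type*} [MeasurableSpace X] [Fintype ι]
    [DecidableEq ι] {μ : Measure X} {g : ι → X → ℝ} {s : Set X} (hs : MeasurableSet s)
    (hμs : μ s ≠ ⊤) (hg : ∀ j, MemLp (g j) 2 μ)
    (horth : ∀ i j, ∫ x, g i x * g j x ∂μ = if i = j then 1 else 0) :
    ∑ j, (∫ x in s, g j x ∂μ) ^ 2 ≤ μ.real s := by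
  have bessel := sum_sq_integral_mul_le_integral_sq
    (memLp_indicator_const 2 hs (1 : ℝ) (.inr hμs)) hg horth
  have mul_indicator (j : ι) (x : X) : g j x * s.indicator (fun _ ↦ 1) x = s.indicator (g j) x := by
    by_cases hx : x ∈ s <;> simp [hx]
  have indicator_sq (x : X) : s.indicator (fun _ ↦ (1 : ℝ)) x ^ 2 = s.indicator 1 x := by
    by_cases hx : x ∈ s <;> simp [hx]
  simp_rw [mul_indicator, indicator_sq, integral_indicator hs] at bessel
  simpa only [Pi.one_apply, setIntegral_const, smul_eq_mul, mul_one] using bessel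

theorem integrableOn_Ioc_prod_Ioc_of_continuous {E : Type*} [NormedAddCommGroup E]
    {f : ℝ × ℝ → E} (hf : Continuous f) (a b c d : ℝ) :
    IntegrableOn f (Set.Ioc a b ×ˢ Set.Ioc c d) :=
  (hf.continuousOn.integrableOn_compact (isCompact_Icc.prod isCompact_Icc)).mono_set
    (Set.prod_mono Set.Ioc_subset_Icc_self Set.Ioc_subset_Icc_self)

theorem intervalIntegral_swap_of_continuous {E : Type*} [NormedAddCommGroup E] [NormedSpace ℝ E]
    {f : ℝ → ℝ → E} (hf : Continuous f.uncurry) (a b c d : ℝ) :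
    ∫ x in a..b, ∫ y in c..d, f x y = ∫ y in c..d, ∫ x in a..b, f x y :=
  intervalIntegral_intervalIntegral_swap (integrableOn_Ioc_prod_Ioc_of_continuous hf _ _ _ _)

theorem periodic_deriv_of_periodic {E : Type*} [NormedAddCommGroup E] [NormedSpace ℝ E]
    {g : ℝ → E} {ℓ : ℝ} (hper : Function.Periodic g ℓ) : Function.Periodic (deriv g) ℓ := fun x ↦ by
  rw [← deriv_comp_add_const, funext hper]

theorem intervalIntegral_comp_add_const_of_periodic {E : Type*} [NormedAddCommGroup E]
    [NormedSpace ℝ E] {φ : ℝ → E} {ℓ : ℝ} (hper : Function.Periodic φ ℓ) (c : ℝ) :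
    ∫ x in 0..ℓ, φ (x + c) = ∫ x in 0..ℓ, φ x := by
  simpa [add_comm] using hper.intervalIntegral_add_eq c 0

theorem intervalIntegral_sub_half_add_half_of_periodic {E : Type*} [NormedAddCommGroup E]
    [NormedSpace ℝ E] {φ : ℝ → E} {ℓ : ℝ} (hper : Function.Periodic φ ℓ) (x : ℝ) :
    ∫ y in (x - ℓ / 2)..(x + ℓ / 2), φ y = ∫ y in 0..ℓ, φ y := by
  rw [← intervalIntegral_comp_add_const_of_periodic hper (x - ℓ / 2),
    intervalIntegral.integral_comp_add_right]
  congr 1 <;> ring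

section Young

variable {ℓ a b : ℝ} {k φ : ℝ → ℝ}

theorem intervalIntegral_intervalIntegral_mul_comp_add_mul (hk : Continuous k) (hφ : Continuous φ)
    (hper : Function.Periodic φ ℓ) (c : ℝ) :
    ∫ x in 0..ℓ, ∫ u in a..b, k u * φ (x + c * u) = (∫ u in a..b, k u) * ∫ x in 0..ℓ, φ x := by
  rw [intervalIntegral_swap_of_continuous (by fun_prop)]
  simp_rw [intervalIntegral.integral_const_mul, intervalIntegral_comp_add_const_of_periodic hper,
    intervalIntegral.integral_mul_const]

theorem integral_sq_integral_mul_comp_add_mul_le (hℓ : 0 ≤ ℓ) (hab : a ≤ b) (hk : Continuous k)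
    (hk_nonneg : ∀ u ∈ Set.Ioc a b, 0 ≤ k u) (hφ : Continuous φ) (hper : Function.Periodic φ ℓ)
    (c : ℝ) :
    ∫ x in 0..ℓ, (∫ u in a..b, k u * φ (x + c * u)) ^ 2 ≤
      (∫ u in a..b, k u) ^ 2 * ∫ x in 0..ℓ, φ x ^ 2 := by
  have cauchy_schwarz (x : ℝ) : (∫ u in a..b, k u * φ (x + c * u)) ^ 2 ≤
      (∫ u in a..b, k u) * ∫ u in a..b, k u * φ (x + c * u) ^ 2 := by
    simp_rw [intervalIntegral.integral_of_le hab]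
    refine sq_integral_mul_le_integral_mul_integral_mul_sq
      (ae_restrict_of_forall_mem measurableSet_Ioc hk_nonneg) ?_ ?_ ?_
    all_goals exact Continuous.integrableOn_Ioc (by fun_prop)
  calc ∫ x in 0..ℓ, (∫ u in a..b, k u * φ (x + c * u)) ^ 2
      ≤ ∫ x in 0..ℓ, (∫ u in a..b, k u) * ∫ u in a..b, k u * φ (x + c * u) ^ 2 :=
        intervalIntegral.integral_mono hℓ (Continuous.intervalIntegrable (by fun_prop) _ _)
          (Continuous.intervalIntegrable (by fun_prop) _ _) cauchy_schwarz
    _ = (∫ u in a..b, k u) ^ 2 * ∫ x in 0..ℓ, φ x ^ 2 := by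
        rw [intervalIntegral.integral_const_mul,
          intervalIntegral_intervalIntegral_mul_comp_add_mul (φ := fun x ↦ φ x ^ 2) hk
            (by fun_prop) (hper.comp (· ^ 2)),
          ← mul_assoc, sq]

end Young

theorem integral_sq_sub_le_two_mul_add {a b : ℝ} {p q : ℝ → ℝ} (hab : a ≤ b) (hp : Continuous p)
    (hq : Continuous q) :
    ∫ x in a..b, (p x - q x) ^ 2 ≤ 2 * ((∫ x in a..b, p x ^ 2) + ∫ x in a..b, q x ^ 2) := by
  rw [← intervalIntegral.integral_add, ← intervalIntegral.integral_const_mul]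
  · refine intervalIntegral.integral_mono hab (Continuous.intervalIntegrable (by fun_prop) _ _)
      (Continuous.intervalIntegrable (by fun_prop) _ _) fun x ↦ ?_
    linarith [sq_nonneg (p x + q x), add_sq (p x) (q x), sub_sq (p x) (q x)]
  all_goals exact Continuous.intervalIntegrable (by fun_prop) _ _

/-- The mean of `g` over the interval of length `h` centred at `x`, rescaled to `[-1/2, 1/2]` so
that it is jointly continuous in `(h, x)`, with the value `g x` at `h = 0`. -/
noncomputable def symmAverage (g : ℝ → ℝ) (h x : ℝ) : ℝ :=
  ∫ u in (-1 / 2)..(1 / 2), g (x + h * u)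

section SymmAverage

variable {g : ℝ → ℝ} {ℓ : ℝ}

@[fun_prop]
theorem continuous_symmAverage {X : Type*} [TopologicalSpace X] [FirstCountableTopology X]
    {η ξ : X → ℝ} (hg : Continuous g) (hη : Continuous η) (hξ : Continuous ξ) :
    Continuous fun p ↦ symmAverage g (η p) (ξ p) := by
  unfold symmAverage
  fun_prop

theorem mul_symmAverage (g : ℝ → ℝ) (h x : ℝ) :
    h * symmAverage g h x = ∫ y in (x - h / 2)..(x + h / 2), g y := by
  rw [symmAverage, ← smul_eq_mul, intervalIntegral.smul_integral_comp_add_mul]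
  congr 1 <;> ring

theorem symmAverage_period_eq_zero (hℓ : ℓ ≠ 0) (hper : Function.Periodic g ℓ)
    (hmean : ∫ x in 0..ℓ, g x = 0) (x : ℝ) : symmAverage g ℓ x = 0 := by
  have mul_eq_zero : ℓ * symmAverage g ℓ x = 0 := by
    rw [mul_symmAverage, intervalIntegral_sub_half_add_half_of_periodic hper, hmean]
  exact (mul_eq_zero_iff_left hℓ).mp mul_eq_zero

theorem integral_sq_symmAverage_le (hℓ : 0 ≤ ℓ) (hg : Continuous g) (hper : Function.Periodic g ℓ)
    (h : ℝ) : ∫ x in 0..ℓ, symmAverage g h x ^ 2 ≤ ∫ x in 0..ℓ, g x ^ 2 := by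
  have young := integral_sq_integral_mul_comp_add_mul_le (a := -1 / 2) (b := 1 / 2) hℓ (by norm_num)
    (k := fun _ ↦ 1) (by fun_prop) (fun _ _ ↦ zero_le_one) hg hper h
  have integral_weight : ∫ _ in (-1 / 2 : ℝ)..(1 / 2), (1 : ℝ) = 1 := by norm_num
  simpa only [symmAverage, integral_weight, one_mul, one_pow] using young

theorem integral_sq_sub_symmAverage_le_four_mul (hℓ : 0 ≤ ℓ) (hg : Continuous g)
    (hper : Function.Periodic g ℓ) (h : ℝ) :
    ∫ x in 0..ℓ, (g x - symmAverage g h x) ^ 2 ≤ 4 * ∫ x in 0..ℓ, g x ^ 2 := by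
  have split := integral_sq_sub_le_two_mul_add (q := symmAverage g h) hℓ hg (by fun_prop)
  linarith [integral_sq_symmAverage_le hℓ hg hper h]

theorem mul_sub_integral_comp_add_mul (hg : ContDiff ℝ 1 g) (x c t : ℝ) :
    t * g x - ∫ u in 0..t, g (x + c * u) = -(c * ∫ u in 0..t, (t - u) * deriv g (x + c * u)) := by
  have hg' : Continuous (deriv g) := hg.continuous_deriv_one
  have hderiv (u : ℝ) : HasDerivAt (fun u ↦ g (x + c * u)) (c * deriv g (x + c * u)) u := by
    have inner := ((hasDerivAt_id u).const_mul c).const_add x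
    simpa [Function.comp_def, mul_comm] using
      ((hg.differentiable one_ne_zero (x + c * u)).hasDerivAt).comp u inner
  have by_parts := intervalIntegral.integral_mul_deriv_eq_deriv_mul (a := 0) (b := t)
    (fun u _ ↦ (hasDerivAt_id u).const_sub t) (fun u _ ↦ hderiv u)
    (Continuous.intervalIntegrable (by fun_prop) _ _)
    (((hg'.comp (by fun_prop)).const_mul c).intervalIntegrable _ _)
  simp only [id, mul_left_comm _ c, intervalIntegral.integral_const_mul, neg_one_mul,
    intervalIntegral.integral_neg] at by_parts
  rw [by_parts, mul_zero, add_zero]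
  ring

theorem sub_symmAverage_eq (hg : ContDiff ℝ 1 g) (h x : ℝ) :
    g x - symmAverage g h x =
      h * (∫ u in 0..(1 / 2), (1 / 2 - u) * deriv g (x + -h * u)) -
        h * ∫ u in 0..(1 / 2), (1 / 2 - u) * deriv g (x + h * u) := by
  have hgc : Continuous g := hg.continuous
  have halves : symmAverage g h x =
      (∫ u in 0..(1 / 2), g (x + -h * u)) + ∫ u in 0..(1 / 2), g (x + h * u) := by
    rw [symmAverage, ← intervalIntegral.integral_add_adjacent_intervals (b := 0)]
    · congr 1
      simpa [neg_div] using
        (intervalIntegral.integral_comp_neg (a := 0) (b := 1 / 2) fun u ↦ g (x + h * u)).symm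
    all_goals exact Continuous.intervalIntegrable (by fun_prop) _ _
  linarith [mul_sub_integral_comp_add_mul hg x h (1 / 2),
    mul_sub_integral_comp_add_mul hg x (-h) (1 / 2)]

theorem integral_sq_sub_symmAverage_le (hℓ : 0 ≤ ℓ) (hg : ContDiff ℝ 1 g)
    (hper : Function.Periodic g ℓ) (h : ℝ) :
    ∫ x in 0..ℓ, (g x - symmAverage g h x) ^ 2 ≤ h ^ 2 / 16 * ∫ x in 0..ℓ, deriv g x ^ 2 := by
  have hg' : Continuous (deriv g) := hg.continuous_deriv_one
  have integral_weight : ∫ u in (0 : ℝ)..(1 / 2), (1 / 2 - u) = 1 / 8 := by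
    rw [intervalIntegral.integral_sub (by simp) (by simp)]
    norm_num
  have half_le (c : ℝ) :
      ∫ x in 0..ℓ, (h * ∫ u in 0..(1 / 2), (1 / 2 - u) * deriv g (x + c * u)) ^ 2 ≤
        h ^ 2 / 64 * ∫ x in 0..ℓ, deriv g x ^ 2 := by
    have young := integral_sq_integral_mul_comp_add_mul_le hℓ one_half_pos.le
      (k := fun u ↦ 1 / 2 - u) (by fun_prop) (fun u hu ↦ sub_nonneg.mpr hu.2) hg'
      (periodic_deriv_of_periodic hper) c
    simp_rw [mul_pow, intervalIntegral.integral_const_mul]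
    rw [integral_weight] at young
    linarith [mul_le_mul_of_nonneg_left young (sq_nonneg h)]
  simp_rw [sub_symmAverage_eq hg]
  refine (integral_sq_sub_le_two_mul_add hℓ (by fun_prop) (by fun_prop)).trans ?_
  linarith [half_le h, half_le (-h)]

theorem sum_sq_symmAverage_le {ι : Type*} [Fintype ι] [DecidableEq ι] {g : ι → ℝ → ℝ}
    (hg : ∀ j, Continuous (g j)) (hper : ∀ j, Function.Periodic (g j) ℓ)
    (horth : ∀ i j, ∫ x in 0..ℓ, g i x * g j x = if i = j then 1 else 0)
    {h : ℝ} (hh : 0 < h) (hhℓ : h ≤ ℓ) (x : ℝ) :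
    ∑ j, symmAverage (g j) h x ^ 2 ≤ 1 / h := by
  let I := Set.Ioc (x - h / 2) (x + h / 2)
  let J := Set.Ioc (x - ℓ / 2) (x + ℓ / 2)
  have hIJ : I ⊆ J := Set.Ioc_subset_Ioc (by linarith) (by linarith)
  have hg_memLp (j : ι) : MemLp (g j) 2 (volume.restrict J) :=
    (memLp_two_iff_integrable_sq (hg j).aestronglyMeasurable).mpr ((hg j).pow 2).integrableOn_Ioc
  have horthJ (i j : ι) : ∫ y in J, g i y * g j y = if i = j then 1 else 0 := by
    rw [← horth i j, ← intervalIntegral.integral_of_le (by linarith)]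
    exact intervalIntegral_sub_half_add_half_of_periodic ((hper i).mul (hper j)) x
  have integral_eq (j : ι) :
      ∫ y in I, g j y ∂volume.restrict J = h * symmAverage (g j) h x := by
    rw [Measure.restrict_restrict_of_subset hIJ, mul_symmAverage,
      intervalIntegral.integral_of_le (by linarith)]
  have length_eq : (volume.restrict J).real I = h := by
    rw [measureReal_restrict_apply measurableSet_Ioc, Set.inter_eq_left.mpr hIJ,
      Real.volume_real_Ioc_of_le (by linarith)]
    ring
  have bessel := sum_sq_setIntegral_le_measureReal (s := I) measurableSet_Ioc
    (measure_ne_top _ _) hg_memLp horthJ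
  simp_rw [integral_eq, length_eq, mul_pow, ← Finset.mul_sum] at bessel
  rw [le_div_iff₀ hh]
  nlinarith

end SymmAverage

theorem integral_two_mul_mul_sub_sq (r : ℝ) :
    ∫ t in 0..r, 2 * t * (r - t) ^ 2 = r ^ 4 / 6 := by
  calc ∫ t in 0..r, 2 * t * (r - t) ^ 2
      = ∫ t in 0..r, 2 * r ^ 2 * t - 4 * r * t ^ 2 + 2 * t ^ 3 := by congr with t; ring
    _ = r ^ 4 / 6 := by
        rw [intervalIntegral.integral_add, intervalIntegral.integral_sub,
          intervalIntegral.integral_const_mul, intervalIntegral.integral_const_mul,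
          intervalIntegral.integral_const_mul, integral_id, integral_pow, integral_pow]
        · ring
        all_goals exact Continuous.intervalIntegrable (by fun_prop) _ _

theorem norm_pow_four_div_six_le_integral {E : Type*} [NormedAddCommGroup E] {v : E} {a : ℝ → E}
    {M : ℝ} (ha : Continuous a) (ha_le : ∀ t, 0 ≤ t → ‖a t‖ ≤ t) (hM : ‖v‖ ≤ M) :
    ‖v‖ ^ 4 / 6 ≤ ∫ t in 0..M, 2 * t * ‖v - a t‖ ^ 2 := by
  calc ‖v‖ ^ 4 / 6 = ∫ t in 0..‖v‖, 2 * t * (‖v‖ - t) ^ 2 := (integral_two_mul_mul_sub_sq _).symm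
    _ ≤ ∫ t in 0..‖v‖, 2 * t * ‖v - a t‖ ^ 2 := by
        refine intervalIntegral.integral_mono_on (norm_nonneg v)
          (Continuous.intervalIntegrable (by fun_prop) _ _)
          (Continuous.intervalIntegrable (by fun_prop) _ _) fun t ht ↦ ?_
        have reverse_triangle : ‖v‖ - t ≤ ‖v - a t‖ := by
          linarith [norm_sub_norm_le v (a t), ha_le t ht.1]
        have := ht.1
        have := sub_nonneg.mpr ht.2
        gcongr
    _ ≤ ∫ t in 0..M, 2 * t * ‖v - a t‖ ^ 2 := by
        refine intervalIntegral.integral_mono_interval le_rfl (norm_nonneg v) hM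
          (ae_restrict_of_forall_mem measurableSet_Ioc fun t ht ↦ ?_)
          (Continuous.intervalIntegrable (by fun_prop) _ _)
        have := ht.1.le
        positivity

theorem le_two_mul_sqrt_of_forall_le_add_div {A B X : ℝ} (hA : 0 < A) (hB : 0 ≤ B)
    (hX : ∀ s, 0 < s → X ≤ A * s + B / s) : X ≤ 2 * √(A * B) := by
  rcases hB.eq_or_lt with rfl | hB
  · rw [mul_zero, Real.sqrt_zero, mul_zero]
    refine le_of_forall_pos_le_add fun ε hε ↦ (hX (ε / A) (by positivity)).trans_eq ?_
    rw [mul_div_cancel₀ ε hA.ne', zero_div, add_comm]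
  · refine (hX (√B / √A) (by positivity)).trans_eq ?_
    rw [Real.sqrt_mul hA.le]
    field_simp
    rw [Real.sq_sqrt hA.le, Real.sq_sqrt hB.le]
    ring

section LayerIntegral

variable {F : ℝ → ℝ} {A B M T : ℝ}

theorem integral_two_mul_mul_le_of_le_const (hF : Continuous F) (hFA : ∀ t, F t ≤ A) (hT : 0 ≤ T) :
    ∫ t in 0..T, 2 * t * F t ≤ A * T ^ 2 := by
  calc ∫ t in 0..T, 2 * t * F t ≤ ∫ t in 0..T, 2 * A * t :=
        intervalIntegral.integral_mono_on hT (Continuous.intervalIntegrable (by fun_prop) _ _)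
          (Continuous.intervalIntegrable (by fun_prop) _ _) fun t ht ↦ by
            linarith [mul_le_mul_of_nonneg_left (hFA t) ht.1]
    _ = A * T ^ 2 := by
        rw [intervalIntegral.integral_const_mul, integral_id]
        ring

theorem integral_two_mul_mul_le_of_le_div_pow_four (hF : Continuous F)
    (hFB : ∀ t, 0 < t → F t ≤ B / t ^ 4) (hT : 0 < T) (hTM : T ≤ M) :
    ∫ t in T..M, 2 * t * F t ≤ B / T ^ 2 - B / M ^ 2 := by
  have zero_notMem : (0 : ℝ) ∉ Set.uIcc T M := by
    rw [Set.uIcc_of_le hTM]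
    exact fun h ↦ hT.not_ge h.1
  calc ∫ t in T..M, 2 * t * F t ≤ ∫ t in T..M, 2 * B * t ^ (-3 : ℤ) := by
        refine intervalIntegral.integral_mono_on hTM
          (Continuous.intervalIntegrable (by fun_prop) _ _)
          ((intervalIntegral.intervalIntegrable_zpow (.inr zero_notMem)).const_mul _) fun t ht ↦ ?_
        have ht_pos : 0 < t := hT.trans_le ht.1
        calc 2 * t * F t ≤ 2 * t * (B / t ^ 4) := by gcongr; exact hFB t ht_pos
          _ = 2 * B * t ^ (-3 : ℤ) := by
            rw [zpow_neg]
            field_simp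
    _ = B / T ^ 2 - B / M ^ 2 := by
        rw [intervalIntegral.integral_const_mul, integral_zpow (.inr ⟨by norm_num, zero_notMem⟩)]
        norm_num [zpow_neg, zpow_ofNat]
        ring

theorem integral_two_mul_mul_le_add (hF : Continuous F) (hA : 0 ≤ A) (hB : 0 ≤ B)
    (hFA : ∀ t, F t ≤ A) (hFB : ∀ t, 0 < t → F t ≤ B / t ^ 4) (hM : 0 ≤ M) (hT : 0 < T) :
    ∫ t in 0..M, 2 * t * F t ≤ A * T ^ 2 + B / T ^ 2 := by
  rcases le_total M T with hMT | hTM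
  · calc ∫ t in 0..M, 2 * t * F t ≤ A * M ^ 2 := integral_two_mul_mul_le_of_le_const hF hFA hM
      _ ≤ A * T ^ 2 := by gcongr
      _ ≤ A * T ^ 2 + B / T ^ 2 := le_add_of_nonneg_right (by positivity)
  · rw [← intervalIntegral.integral_add_adjacent_intervals (b := T)]
    · have tail := integral_two_mul_mul_le_of_le_div_pow_four hF hFB hT hTM
      have : 0 ≤ B / M ^ 2 := by positivity
      linarith [integral_two_mul_mul_le_of_le_const hF hFA hT.le]
    all_goals exact Continuous.intervalIntegrable (by fun_prop) _ _

theorem integral_two_mul_mul_le_two_mul_sqrt (hF : Continuous F) (hA : 0 < A) (hB : 0 ≤ B)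
    (hFA : ∀ t, F t ≤ A) (hFB : ∀ t, 0 < t → F t ≤ B / t ^ 4) (hM : 0 ≤ M) :
    ∫ t in 0..M, 2 * t * F t ≤ 2 * √(A * B) :=
  le_two_mul_sqrt_of_forall_le_add_div hA hB fun s hs ↦ by
    simpa only [Real.sq_sqrt hs.le] using
      integral_two_mul_mul_le_add hF hA.le hB hFA hFB hM (Real.sqrt_pos.mpr hs)

end LayerIntegral

/-- The width `min (1 / t ^ 2) ℓ` of the averages attached to the level `t`, written so that it is
continuous at `t = 0`. -/
noncomputable def averagingWidth (ℓ t : ℝ) : ℝ := 1 / max (t ^ 2) (1 / ℓ)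

theorem continuous_averagingWidth {ℓ : ℝ} (hℓ : 0 < ℓ) : Continuous (averagingWidth ℓ) :=
  continuous_const.div (by fun_prop) fun _ ↦ (lt_max_of_lt_right (one_div_pos.mpr hℓ)).ne'

theorem averagingWidth_sq_le {ℓ t : ℝ} (ht : 0 < t) : averagingWidth ℓ t ^ 2 ≤ 1 / t ^ 4 := by
  calc averagingWidth ℓ t ^ 2 ≤ (1 / t ^ 2) ^ 2 := by
        unfold averagingWidth
        gcongr
        exact le_max_left _ _
    _ = 1 / t ^ 4 := by ring

/-- The part of an `ℓ`-periodic function `g` kept at the level `t`: its mean over intervals of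
length `averagingWidth ℓ t`. For an orthonormal mean-zero family the squares of these parts add up
to at most `t ^ 2`. -/
noncomputable def levelAverage (ℓ : ℝ) (g : ℝ → ℝ) (t x : ℝ) : ℝ :=
  symmAverage g (averagingWidth ℓ t) x

section LevelAverage

variable {ℓ : ℝ} {g : ℝ → ℝ}

@[fun_prop]
theorem continuous_levelAverage {X : Type*} [TopologicalSpace X] [FirstCountableTopology X]
    {τ ξ : X → ℝ} (hℓ : 0 < ℓ) (hg : Continuous g) (hτ : Continuous τ) (hξ : Continuous ξ) :
    Continuous fun p ↦ levelAverage ℓ g (τ p) (ξ p) :=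
  continuous_symmAverage hg ((continuous_averagingWidth hℓ).comp hτ) hξ

theorem integral_sq_sub_levelAverage_le (hℓ : 0 ≤ ℓ) (hg : ContDiff ℝ 1 g)
    (hper : Function.Periodic g ℓ) {t : ℝ} (ht : 0 < t) :
    ∫ x in 0..ℓ, (g x - levelAverage ℓ g t x) ^ 2 ≤
      (∫ x in 0..ℓ, deriv g x ^ 2) / 16 / t ^ 4 := by
  have energy_nonneg : 0 ≤ ∫ x in 0..ℓ, deriv g x ^ 2 :=
    intervalIntegral.integral_nonneg hℓ fun _ _ ↦ sq_nonneg _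
  calc ∫ x in 0..ℓ, (g x - levelAverage ℓ g t x) ^ 2
      ≤ averagingWidth ℓ t ^ 2 / 16 * ∫ x in 0..ℓ, deriv g x ^ 2 :=
        integral_sq_sub_symmAverage_le hℓ hg hper _
    _ ≤ 1 / t ^ 4 / 16 * ∫ x in 0..ℓ, deriv g x ^ 2 := by
        gcongr
        exact averagingWidth_sq_le ht
    _ = (∫ x in 0..ℓ, deriv g x ^ 2) / 16 / t ^ 4 := by ring

theorem integral_level_mul_integral_sq_sub_levelAverage_le {M : ℝ} (hℓ : 0 < ℓ)
    (hg : ContDiff ℝ 1 g) (hper : Function.Periodic g ℓ) (hnorm : ∫ x in 0..ℓ, g x ^ 2 = 1)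
    (hM : 0 ≤ M) :
    ∫ t in 0..M, 2 * t * ∫ x in 0..ℓ, (g x - levelAverage ℓ g t x) ^ 2 ≤
      √(∫ x in 0..ℓ, deriv g x ^ 2) := by
  have hgc : Continuous g := hg.continuous
  have energy_nonneg : 0 ≤ ∫ x in 0..ℓ, deriv g x ^ 2 :=
    intervalIntegral.integral_nonneg hℓ.le fun _ _ ↦ sq_nonneg _
  have layers := integral_two_mul_mul_le_two_mul_sqrt (A := 4)
    (F := fun t ↦ ∫ x in 0..ℓ, (g x - levelAverage ℓ g t x) ^ 2) (by fun_prop) (by norm_num)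
    (by positivity)
    (fun t ↦ by
      simpa [hnorm, levelAverage] using integral_sq_sub_symmAverage_le_four_mul hℓ.le hgc hper
        (averagingWidth ℓ t))
    (fun t ht ↦ integral_sq_sub_levelAverage_le hℓ.le hg hper ht) hM
  refine layers.trans_eq ?_
  rw [show 4 * ((∫ x in 0..ℓ, deriv g x ^ 2) / 16) = (∫ x in 0..ℓ, deriv g x ^ 2) / 2 ^ 2 by ring,
    Real.sqrt_div energy_nonneg, Real.sqrt_sq zero_le_two]
  ring

end LevelAverage

section OrthonormalFamily

variable {ι : Type*} [Fintype ι] [DecidableEq ι] {ℓ M : ℝ} {g : ι → ℝ → ℝ}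

theorem sum_sq_levelAverage_le (hℓ : 0 < ℓ) (hg : ∀ j, Continuous (g j))
    (hper : ∀ j, Function.Periodic (g j) ℓ) (hmean : ∀ j, ∫ x in 0..ℓ, g j x = 0)
    (horth : ∀ i j, ∫ x in 0..ℓ, g i x * g j x = if i = j then 1 else 0) (t x : ℝ) :
    ∑ j, levelAverage ℓ (g j) t x ^ 2 ≤ t ^ 2 := by
  unfold levelAverage averagingWidth
  rcases le_total (1 / ℓ) (t ^ 2) with hlarge | hsmall
  · have ht_sq : 0 < t ^ 2 := (one_div_pos.mpr hℓ).trans_le hlarge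
    rw [max_eq_left hlarge]
    simpa only [one_div_one_div] using sum_sq_symmAverage_le hg hper horth
      (one_div_pos.mpr ht_sq) ((one_div_le hℓ ht_sq).mp hlarge) x
  · rw [max_eq_right hsmall, one_div_one_div]
    simp only [symmAverage_period_eq_zero hℓ.ne' (hper _) (hmean _)]
    simpa using sq_nonneg t

theorem sq_sum_sq_div_six_le_integral (hℓ : 0 < ℓ) (hg : ∀ j, Continuous (g j))
    (hper : ∀ j, Function.Periodic (g j) ℓ) (hmean : ∀ j, ∫ x in 0..ℓ, g j x = 0)
    (horth : ∀ i j, ∫ x in 0..ℓ, g i x * g j x = if i = j then 1 else 0) {x : ℝ}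
    (hM : √(∑ j, g j x ^ 2) ≤ M) :
    (∑ j, g j x ^ 2) ^ 2 / 6 ≤
      ∫ t in 0..M, 2 * t * ∑ j, (g j x - levelAverage ℓ (g j) t x) ^ 2 := by
  let v : EuclideanSpace ℝ ι := WithLp.toLp 2 fun j ↦ g j x
  let a (t : ℝ) : EuclideanSpace ℝ ι := WithLp.toLp 2 fun j ↦ levelAverage ℓ (g j) t x
  have ha : Continuous a := by fun_prop
  have ha_le (t : ℝ) (ht : 0 ≤ t) : ‖a t‖ ≤ t := by
    rw [← sq_le_sq₀ (norm_nonneg _) ht, EuclideanSpace.real_norm_sq_eq]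
    exact sum_sq_levelAverage_le hℓ hg hper hmean horth t x
  have norm_v_le : ‖v‖ ≤ M := by
    rw [EuclideanSpace.norm_eq]
    simpa [v] using hM
  have layers := norm_pow_four_div_six_le_integral ha ha_le norm_v_le
  simpa only [show 4 = 2 * 2 from rfl, pow_mul, EuclideanSpace.real_norm_sq_eq, PiLp.sub_apply, v,
    a] using layers

theorem integral_sq_sum_sq_le (hℓ : 0 < ℓ) (hg : ∀ j, ContDiff ℝ 1 (g j))
    (hper : ∀ j, Function.Periodic (g j) ℓ) (hmean : ∀ j, ∫ x in 0..ℓ, g j x = 0)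
    (horth : ∀ i j, ∫ x in 0..ℓ, g i x * g j x = if i = j then 1 else 0) :
    ∫ x in 0..ℓ, (∑ j, g j x ^ 2) ^ 2 ≤ 6 * ∑ j, √(∫ x in 0..ℓ, deriv (g j) x ^ 2) := by
  have hgc (j : ι) : Continuous (g j) := (hg j).continuous
  obtain ⟨M, hM⟩ := isCompact_Icc.bddAbove_image (K := Set.Icc 0 ℓ)
    (f := fun x ↦ √(∑ j, g j x ^ 2)) (by fun_prop)
  have hM_le (x : ℝ) (hx : x ∈ Set.Icc 0 ℓ) : √(∑ j, g j x ^ 2) ≤ M :=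
    hM (Set.mem_image_of_mem _ hx)
  have hM_nonneg : 0 ≤ M := (Real.sqrt_nonneg _).trans (hM_le 0 ⟨le_rfl, hℓ.le⟩)
  have hnorm (j : ι) : ∫ x in 0..ℓ, g j x ^ 2 = 1 := by simpa [sq] using horth j j
  suffices ∫ x in 0..ℓ, (∑ j, g j x ^ 2) ^ 2 / 6 ≤ ∑ j, √(∫ x in 0..ℓ, deriv (g j) x ^ 2) by
    rw [intervalIntegral.integral_div] at this
    linarith
  calc ∫ x in 0..ℓ, (∑ j, g j x ^ 2) ^ 2 / 6
      ≤ ∫ x in 0..ℓ, ∫ t in 0..M, 2 * t * ∑ j, (g j x - levelAverage ℓ (g j) t x) ^ 2 :=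
        intervalIntegral.integral_mono_on hℓ.le (Continuous.intervalIntegrable (by fun_prop) _ _)
          (Continuous.intervalIntegrable (by fun_prop) _ _) fun x hx ↦
            sq_sum_sq_div_six_le_integral hℓ hgc hper hmean horth (hM_le x hx)
    _ = ∫ t in 0..M, 2 * t * ∫ x in 0..ℓ, ∑ j, (g j x - levelAverage ℓ (g j) t x) ^ 2 := by
        rw [intervalIntegral_swap_of_continuous (by fun_prop)]
        simp_rw [intervalIntegral.integral_const_mul]
    _ = ∑ j, ∫ t in 0..M, 2 * t * ∫ x in 0..ℓ, (g j x - levelAverage ℓ (g j) t x) ^ 2 := by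
        rw [← intervalIntegral.integral_finsetSum
          fun j _ ↦ Continuous.intervalIntegrable (by fun_prop) _ _]
        congr with t
        rw [intervalIntegral.integral_finsetSum
          fun j _ ↦ Continuous.intervalIntegrable (by fun_prop) _ _, Finset.mul_sum]
    _ ≤ ∑ j, √(∫ x in 0..ℓ, deriv (g j) x ^ 2) :=
        Finset.sum_le_sum fun j _ ↦ integral_level_mul_integral_sq_sub_levelAverage_le hℓ (hg j)
          (hper j) (hnorm j) hM_nonneg

end OrthonormalFamily

theorem setIntegral_Ioc_prod_Ioc_comp_fst {ℓ L : ℝ} (hℓ : 0 ≤ ℓ) (hL : 0 ≤ L) (φ : ℝ → ℝ) :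
    ∫ x in Set.Ioc 0 ℓ ×ˢ Set.Ioc 0 L, φ x.1 = L * ∫ s in 0..ℓ, φ s := by
  rw [Measure.volume_eq_prod, ← Measure.prod_restrict, integral_fun_fst,
    intervalIntegral.integral_of_le hℓ]
  simp [Measure.real, hL]

/-- A parallel shear flow: a planar vector field directed along the second axis whose value depends
on the first variable only. -/
def IsShear (v : ℝ × ℝ → ℝ × ℝ) : Prop := ∀ x, v x = (0, (v (x.1, 0)).2)

/-- The velocity profile of a shear flow `v` on `(0, ℓ) × (0, L)`, normalised by `√L` so that `L²`
inner products of shear flows on the rectangle are those of their profiles on `(0, ℓ)`. -/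
noncomputable def shearProfile (L : ℝ) (v : ℝ × ℝ → ℝ × ℝ) (s : ℝ) : ℝ := √L * (v (s, 0)).2

theorem pd2_eq_zero_of_eq_comp_fst {f : ℝ × ℝ → ℝ} {φ : ℝ → ℝ} (hf : ∀ x, f x = φ x.1)
    (x : ℝ × ℝ) : pd2 f x = 0 := by
  simp only [pd2, hf, deriv_const]

theorem isShear_of_div_eq_zero {v : ℝ × ℝ → ℝ × ℝ} {ℓ L : ℝ} (hℓ : 0 < ℓ) (hL : 0 < L)
    (hv : ContDiff ℝ 1 v) (hfst : ∀ x y, x.1 = y.1 → v x = v y)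
    (hdiv : ∀ x, pd1 (fun y ↦ (v y).1) x + pd2 (fun y ↦ (v y).2) x = 0)
    (hmean : ∫ x in Set.Ioc 0 ℓ ×ˢ Set.Ioc 0 L, v x = 0) : IsShear v := by
  have eq_line (x) : v x = v (x.1, 0) := hfst x (x.1, 0) rfl
  have fst_const (s) : (v (s, 0)).1 = (v (0, 0)).1 := by
    refine is_const_of_deriv_eq_zero (f := fun s ↦ (v (s, 0)).1)
      (ContDiff.differentiable (by fun_prop) one_ne_zero) (fun s ↦ ?_) s 0
    have pd2_snd : pd2 (fun y ↦ (v y).2) (s, 0) = 0 :=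
      pd2_eq_zero_of_eq_comp_fst (φ := fun s ↦ (v (s, 0)).2) (fun x ↦ by rw [eq_line x]) _
    simpa only [pd1, pd2_snd, add_zero] using hdiv (s, 0)
  have fst_zero : (v (0, 0)).1 = 0 := by
    have mean_fst := congrArg Prod.fst hmean
    rw [fst_integral (integrableOn_Ioc_prod_Ioc_of_continuous hv.continuous 0 ℓ 0 L)] at mean_fst
    simp_rw [eq_line, fst_const] at mean_fst
    rw [setIntegral_Ioc_prod_Ioc_comp_fst hℓ.le hL.le fun _ ↦ (v (0, 0)).1] at mean_fst
    simpa [hL.ne', hℓ.ne'] using mean_fst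
  exact fun x ↦ Prod.ext (by rw [eq_line, fst_const, fst_zero]) (by rw [eq_line])

theorem contDiff_shearProfile {v : ℝ × ℝ → ℝ × ℝ} (L : ℝ) (hv : ContDiff ℝ 1 v) :
    ContDiff ℝ 1 (shearProfile L v) := by
  unfold shearProfile
  fun_prop

theorem periodic_shearProfile {v : ℝ × ℝ → ℝ × ℝ} {ℓ : ℝ} (L : ℝ)
    (hper : ∀ x, v (x.1 + ℓ, x.2) = v x) : Function.Periodic (shearProfile L v) ℓ := fun s ↦ by
  simp only [shearProfile, hper (s, 0)]

namespace IsShear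

variable {u v : ℝ × ℝ → ℝ × ℝ} {ℓ L : ℝ}

theorem fst_eq_zero (hv : IsShear v) (x : ℝ × ℝ) : (v x).1 = 0 := by rw [hv x]

theorem snd_eq (hv : IsShear v) (x : ℝ × ℝ) : (v x).2 = (v (x.1, 0)).2 := by rw [hv x]

theorem gradSq_eq (hv : IsShear v) (x : ℝ × ℝ) :
    gradSq v x = deriv (fun s ↦ (v (s, 0)).2) x.1 ^ 2 := by
  have pd2_snd : pd2 (fun y ↦ (v y).2) x = 0 :=
    pd2_eq_zero_of_eq_comp_fst (φ := fun s ↦ (v (s, 0)).2) hv.snd_eq x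
  rw [gradSq, pd2_snd]
  simp [pd1, pd2, hv.fst_eq_zero, hv.snd_eq (_, x.2)]

theorem integral_shearProfile_eq_zero (hv : IsShear v) (hℓ : 0 ≤ ℓ) (hL : 0 < L)
    (hcont : Continuous v) (hmean : ∫ x in Set.Ioc 0 ℓ ×ˢ Set.Ioc 0 L, v x = 0) :
    ∫ s in 0..ℓ, shearProfile L v s = 0 := by
  have mean_snd := congrArg Prod.snd hmean
  rw [snd_integral (integrableOn_Ioc_prod_Ioc_of_continuous hcont 0 ℓ 0 L)] at mean_snd
  simp_rw [hv.snd_eq] at mean_snd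
  rw [setIntegral_Ioc_prod_Ioc_comp_fst hℓ hL.le fun s ↦ (v (s, 0)).2] at mean_snd
  simp only [shearProfile, intervalIntegral.integral_const_mul,
    (mul_eq_zero.mp mean_snd).resolve_left hL.ne', mul_zero]

theorem setIntegral_inner_eq (hu : IsShear u) (hv : IsShear v) (hℓ : 0 ≤ ℓ) (hL : 0 ≤ L) :
    ∫ x in Set.Ioc 0 ℓ ×ˢ Set.Ioc 0 L, ((u x).1 * (v x).1 + (u x).2 * (v x).2) =
      ∫ s in 0..ℓ, shearProfile L u s * shearProfile L v s := by
  simp_rw [hu.fst_eq_zero, hu.snd_eq, hv.snd_eq, zero_mul, zero_add]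
  rw [setIntegral_Ioc_prod_Ioc_comp_fst hℓ hL fun s ↦ (u (s, 0)).2 * (v (s, 0)).2,
    ← intervalIntegral.integral_const_mul]
  congr with s
  simp only [shearProfile]
  rw [mul_mul_mul_comm, Real.mul_self_sqrt hL]

theorem setIntegral_gradSq_eq (hv : IsShear v) (hℓ : 0 ≤ ℓ) (hL : 0 ≤ L) :
    ∫ x in Set.Ioc 0 ℓ ×ˢ Set.Ioc 0 L, gradSq v x =
      ∫ s in 0..ℓ, deriv (shearProfile L v) s ^ 2 := by
  simp_rw [hv.gradSq_eq]
  rw [setIntegral_Ioc_prod_Ioc_comp_fst hℓ hL fun s ↦ deriv (fun s ↦ (v (s, 0)).2) s ^ 2,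
    ← intervalIntegral.integral_const_mul]
  congr with s
  unfold shearProfile
  rw [deriv_const_mul_field, mul_pow, Real.sq_sqrt hL]

theorem setIntegral_sq_sum_sq_eq {ι : Type*} [Fintype ι] {w : ι → ℝ × ℝ → ℝ × ℝ}
    (hw : ∀ j, IsShear (w j)) (hℓ : 0 ≤ ℓ) (hL : 0 < L) :
    ∫ x in Set.Ioc 0 ℓ ×ˢ Set.Ioc 0 L, (∑ j, ((w j x).1 ^ 2 + (w j x).2 ^ 2)) ^ 2 =
      1 / L * ∫ s in 0..ℓ, (∑ j, shearProfile L (w j) s ^ 2) ^ 2 := by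
  simp_rw [(hw _).fst_eq_zero, (hw _).snd_eq, shearProfile, mul_pow, Real.sq_sqrt hL.le,
    ← Finset.mul_sum, mul_pow, intervalIntegral.integral_const_mul]
  rw [setIntegral_Ioc_prod_Ioc_comp_fst hℓ hL.le fun s ↦ (∑ j, (0 ^ 2 + (w j (s, 0)).2 ^ 2)) ^ 2]
  field_simp
  simp

end IsShear

theorem stmt_19_general {ι : Type*} [Fintype ι] [DecidableEq ι] {ℓ L : ℝ} (hℓ : 0 < ℓ) (hL : 0 < L)
    {w : ι → ℝ × ℝ → ℝ × ℝ} (hC1 : ∀ j, ContDiff ℝ 1 (w j))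
    (hper : ∀ j x, w j (x.1 + ℓ, x.2) = w j x)
    (hfst : ∀ j x y, x.1 = y.1 → w j x = w j y)
    (hdiv : ∀ j x, pd1 (fun y ↦ (w j y).1) x + pd2 (fun y ↦ (w j y).2) x = 0)
    (hmean : ∀ j, ∫ x in Set.Ioc 0 ℓ ×ˢ Set.Ioc 0 L, w j x = 0)
    (hortho : ∀ i j, ∫ x in Set.Ioc 0 ℓ ×ˢ Set.Ioc 0 L,
      ((w i x).1 * (w j x).1 + (w i x).2 * (w j x).2) = if i = j then 1 else 0) :
    ∫ x in Set.Ioc 0 ℓ ×ˢ Set.Ioc 0 L, (∑ j, ((w j x).1 ^ 2 + (w j x).2 ^ 2)) ^ 2 ≤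
      6 / L * ∑ j, √(∫ x in Set.Ioc 0 ℓ ×ˢ Set.Ioc 0 L, gradSq (w j) x) := by
  have shear (j) : IsShear (w j) :=
    isShear_of_div_eq_zero hℓ hL (hC1 j) (hfst j) (hdiv j) (hmean j)
  have profile_bound := integral_sq_sum_sq_le hℓ (fun j ↦ contDiff_shearProfile L (hC1 j))
    (fun j ↦ periodic_shearProfile L (hper j))
    (fun j ↦ (shear j).integral_shearProfile_eq_zero hℓ.le hL (hC1 j).continuous (hmean j))
    (fun i j ↦ ((shear i).setIntegral_inner_eq (shear j) hℓ.le hL.le).symm.trans (hortho i j))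
  simp_rw [IsShear.setIntegral_sq_sum_sq_eq shear hℓ.le hL,
    (shear _).setIntegral_gradSq_eq hℓ.le hL.le]
  calc 1 / L * ∫ s in 0..ℓ, (∑ j, shearProfile L (w j) s ^ 2) ^ 2
      ≤ 1 / L * (6 * ∑ j, √(∫ s in 0..ℓ, deriv (shearProfile L (w j)) s ^ 2)) := by gcongr
    _ = 6 / L * ∑ j, √(∫ s in 0..ℓ, deriv (shearProfile L (w j)) s ^ 2) := by ring

theorem stmt_19 (L α : ℝ) (hL : 0 < L) (hα0 : 0 < α) (hα1 : α ≤ 1)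
    (m : ℕ) (w : Fin m → ℝ × ℝ → ℝ × ℝ)
    (hC1 : ∀ j, ContDiff ℝ 1 (w j))
    (hper1 : ∀ j (x : ℝ × ℝ), w j (x.1 + L / α, x.2) = w j x)
    (hper2 : ∀ j (x : ℝ × ℝ), w j (x.1, x.2 + L) = w j x)
    (hx1only : ∀ j (x y : ℝ × ℝ), x.1 = y.1 → w j x = w j y)
    (hdiv : ∀ j x, pd1 (fun y => (w j y).1) x + pd2 (fun y => (w j y).2) x = 0)
    (hmean : ∀ j, (∫ x in Set.Ioc (0:ℝ) (L / α) ×ˢ Set.Ioc (0:ℝ) L, w j x) = 0)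
    (hortho : ∀ i j, (∫ x in Set.Ioc (0:ℝ) (L / α) ×ˢ Set.Ioc (0:ℝ) L,
        ((w i x).1 * (w j x).1 + (w i x).2 * (w j x).2)) = if i = j then 1 else 0) :
    (∫ x in Set.Ioc (0:ℝ) (L / α) ×ˢ Set.Ioc (0:ℝ) L,
        (∑ j, ((w j x).1 ^ 2 + (w j x).2 ^ 2)) ^ 2) ≤
      (6 / L) * ∑ j, Real.sqrt
        (∫ x in Set.Ioc (0:ℝ) (L / α) ×ˢ Set.Ioc (0:ℝ) L, gradSq (w j) x) := by
  exact stmt_19_general (div_pos hL hα0) hL hC1 hper1 hx1only hdiv hmean hortho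
end
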